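/- arXiv:1208.1788 — 12 statements merged into one kernel-verified Lean document; each statement's English description precedes it below -/
import Mathlib

section
/- There do not exist functions φ : ℕ^ℕ → IC and ψ : IC → ℕ^ℕ such that for every f ∈ ℕ^ℕ and every A ∈ IC, if φ(f) ∩ A is infinite then it is NOT the case that f(n) ≥ ψ(A)(n) for all but finitely many n. (In particular there is no Tukey morphism, Borel or otherwise, from the triple defining the almost disjointness number 𝔞 to the triple defining the bounding number 𝔟.) -/
open Filter

/-- `IC`: the infinite/co-infinite subsets of ℕ. -/
abbrev IC := {A : Set ℕ // A.Infinite ∧ (Aᶜ : Set ℕ).Infinite}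

/-- There is no (Tukey) morphism from the triple defining 𝔞 to the triple defining 𝔟:
there are no maps `φ : ℕ^ℕ → IC` and `ψ : IC → ℕ^ℕ` such that
`φ(f) ∩ A` infinite implies `¬ (f ≥* ψ(A))`. -/
theorem stmt0 :
    ¬ ∃ (φ : (ℕ → ℕ) → IC) (ψ : IC → (ℕ → ℕ)),
      ∀ (f : ℕ → ℕ) (A : IC),
        ((φ f).1 ∩ A.1).Infinite → ¬ (∀ᶠ n in cofinite, ψ A n ≤ f n) := by
  rintro ⟨φ, ψ, h⟩
  have hE : {n : ℕ | n % 2 = 0}.Infinite :=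
    Set.infinite_of_injective_forall_mem (f := fun n : ℕ => 2 * n)
      (fun a b hab => by simp only at hab; omega) (fun n => by simp)
  have hO : ({n : ℕ | n % 2 = 0}ᶜ : Set ℕ).Infinite :=
    Set.infinite_of_injective_forall_mem (f := fun n : ℕ => 2 * n + 1)
      (fun a b hab => by simp only at hab; omega)
      (fun n => by simp only [Set.mem_compl_iff, Set.mem_setOf_eq]; omega)
  let E : IC := ⟨{n : ℕ | n % 2 = 0}, hE, hO⟩
  let O : IC := ⟨{n : ℕ | n % 2 = 0}ᶜ, hO, by rw [compl_compl]; exact hE⟩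
  let f : ℕ → ℕ := fun n => max (ψ E n) (ψ O n)
  have h1 : ¬ ((φ f).1 ∩ E.1).Infinite := fun hi =>
    h f E hi (Eventually.of_forall fun n => le_max_left _ _)
  have h2 : ¬ ((φ f).1 ∩ O.1).Infinite := fun hi =>
    h f O hi (Eventually.of_forall fun n => le_max_right _ _)
  rw [Set.not_infinite] at h1 h2
  apply (φ f).2.1
  have h3 := h1.union h2
  rwa [← Set.inter_union_distrib_left, Set.union_compl_self, Set.inter_univ] at h3
end

section
/- There do not exist functions φ : ℕ^ℕ → [ω]^ω and ψ : [ω]^ω → ℕ^ℕ such that for every f ∈ ℕ^ℕ and every A ∈ [ω]^ω: if f(n) ≥ ψ(A)(n) for all but finitely many n, then φ(f) ∖ A is finite. (This shows that for every class 𝒞 of filters on ℕ, there is no Tukey morphism, Borel or otherwise, from the cardinal 𝔭_𝒞 to the bounding number 𝔟.) -/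
open Filter

/-- `[ω]^ω`: the infinite subsets of ℕ. -/
abbrev InfSubset := {A : Set ℕ // A.Infinite}

/-- There are no maps `φ : ℕ^ℕ → [ω]^ω` and `ψ : [ω]^ω → ℕ^ℕ` such that
whenever `f ≥* ψ(A)` we have `φ(f) ⊆* A`.  (Hence for any class 𝒞 of filters
there is no Tukey morphism from 𝔭_𝒞 to 𝔟.) -/
theorem stmt1 :
    ¬ ∃ (φ : (ℕ → ℕ) → InfSubset) (ψ : InfSubset → (ℕ → ℕ)),
      ∀ (f : ℕ → ℕ) (A : InfSubset),
        (∀ᶠ n in cofinite, ψ A n ≤ f n) → ((φ f).1 \ A.1).Finite := by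
  rintro ⟨φ, ψ, h⟩
  have hE : {n : ℕ | n % 2 = 0}.Infinite :=
    Set.infinite_of_injective_forall_mem (f := fun n : ℕ => 2 * n)
      (fun a b hab => by simp only at hab; omega)
      (fun n => by simp only [Set.mem_setOf_eq]; omega)
  have hO : {n : ℕ | n % 2 = 1}.Infinite :=
    Set.infinite_of_injective_forall_mem (f := fun n : ℕ => 2 * n + 1)
      (fun a b hab => by simp only at hab; omega)
      (fun n => by simp only [Set.mem_setOf_eq]; omega)
  let A : InfSubset := ⟨_, hE⟩
  let B : InfSubset := ⟨_, hO⟩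
  let f : ℕ → ℕ := fun n => max (ψ A n) (ψ B n)
  have h1 := h f A (Eventually.of_forall fun n => le_max_left _ _)
  have h2 := h f B (Eventually.of_forall fun n => le_max_right _ _)
  refine (φ f).2 ((h1.union h2).subset fun n hn => ?_)
  rcases Nat.mod_two_eq_zero_or_one n with h0 | h0
  · exact Or.inr ⟨hn, fun hb => by have hb' : n % 2 = 1 := hb; omega⟩
  · exact Or.inl ⟨hn, fun hb => by have hb' : n % 2 = 0 := hb; omega⟩
end

section
/- Suppose φ, ψ : [ω]^ω → [ω]^ω are maps satisfying: (a) the family ψ([ω]^ω) is centered, and (b) for all A, B ∈ [ω]^ω, if A ⊆* ψ(B) then B does not split φ(A). Then φ and ψ cannot both be Borel. (I.e., there is no Borel Tukey morphism from the splitting number 𝔰 to the pseudo-intersection number 𝔭.) -/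
open Filter

/-- The subset of ℕ coded by an element of Cantor space. -/
def bset (x : ℕ → Bool) : Set ℕ := {n | x n = true}

/-- `[ω]^ω`, regarded as a subspace of Cantor space via characteristic functions. -/
abbrev InfC := {x : ℕ → Bool // (bset x).Infinite}

/-- `A ⊆* B`: `A ∖ B` is finite. -/
def SubStar (A B : Set ℕ) : Prop := (A \ B).Finite

/-- `B` splits `A`: both `A ∩ B` and `A ∖ B` are infinite. -/
def SplitsSet (B A : Set ℕ) : Prop := (A ∩ B).Infinite ∧ (A \ B).Infinite

/-- A family of infinite sets is centered iff every nonempty finite subfamily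
has infinite intersection. -/
def Centered (F : Set InfC) : Prop :=
  ∀ s : Finset InfC, ↑s ⊆ F → s.Nonempty → (⋂ x ∈ s, bset x.1).Infinite

/-- Pointwise exclusive or. -/
def xorF (z y : ℕ → Bool) : ℕ → Bool := fun n => xor (z n) (y n)

lemma exists_cyl {U : Set (ℕ → Bool)} (hU : IsOpen U) {x : ℕ → Bool} (hx : x ∈ U) :
    ∃ M : ℕ, ∀ w : ℕ → Bool, (∀ n < M, w n = x n) → w ∈ U := by
  obtain ⟨I, u, h1, h2⟩ := isOpen_pi_iff.1 hU x hx
  refine ⟨I.sup id + 1, fun w hw => h2 ?_⟩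
  intro i hi
  have : i ≤ I.sup id := Finset.le_sup (f := id) hi
  rw [hw i (by omega)]
  exact (h1 i hi).2

lemma infinite_residual : {x : ℕ → Bool | (bset x).Infinite} ∈ residual (ℕ → Bool) := by
  have h : ∀ n : ℕ, {x : ℕ → Bool | ∃ m, n < m ∧ x m = true} ∈ residual (ℕ → Bool) := by
    intro n
    apply residual_of_dense_open
    · have : {x : ℕ → Bool | ∃ m, n < m ∧ x m = true}
          = ⋃ m, ⋃ (_ : n < m), (fun x : ℕ → Bool => x m) ⁻¹' {true} := by
        ext x; simp
      rw [this]
      exact isOpen_iUnion fun m => isOpen_iUnion fun _ =>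
        (isOpen_discrete _).preimage (continuous_apply m)
    · rw [dense_iff_inter_open]
      rintro U hU ⟨x, hx⟩
      obtain ⟨M, hM⟩ := exists_cyl hU hx
      refine ⟨fun k => if k < M then x k else true, hM _ (fun k hk => by simp [hk]), ?_⟩
      exact ⟨n + M + 1, by omega, by simp; omega⟩
  filter_upwards [countable_iInter_mem.2 h] with x hx
  simp only [Set.mem_iInter, Set.mem_ofPred_eq] at hx
  refine Set.infinite_of_forall_exists_gt fun n => ?_
  obtain ⟨m, h1, h2⟩ := hx n
  exact ⟨m, h2, h1⟩

lemma measurable_infinite : MeasurableSet {x : ℕ → Bool | (bset x).Infinite} := by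
  have : {x : ℕ → Bool | (bset x).Infinite}
      = ⋂ n : ℕ, ⋃ m : ℕ, ⋃ (_ : n < m), (fun x : ℕ → Bool => x m) ⁻¹' {true} := by
    ext x
    simp only [Set.mem_ofPred_eq, Set.mem_iInter, Set.mem_iUnion, Set.mem_preimage,
      Set.mem_singleton_iff, exists_prop]
    constructor
    · intro h n
      obtain ⟨m, h1, h2⟩ := h.exists_gt n
      exact ⟨m, h2, h1⟩
    · intro h
      refine Set.infinite_of_forall_exists_gt fun n => ?_
      obtain ⟨m, h1, h2⟩ := h n
      exact ⟨m, h2, h1⟩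
  rw [this]
  exact MeasurableSet.iInter fun n => MeasurableSet.iUnion fun m => MeasurableSet.iUnion fun _ =>
    (measurable_pi_apply m) (measurableSet_singleton _)

/-- The Borel map agrees with a coordinatewise open one on a countable intersection of
open sets which is residual. -/
lemma exists_generic (ψ : InfC → InfC) (hψ : Measurable ψ) :
    ∃ (U O : ℕ → Set (ℕ → Bool)), (∀ n, IsOpen (U n)) ∧ (∀ n, IsOpen (O n)) ∧
      (⋂ n, U n) ∈ residual (ℕ → Bool) ∧
      ∀ x ∈ ⋂ n, U n, ∃ h : (bset x).Infinite, ∀ n, x ∈ O n ↔ (ψ ⟨x, h⟩).1 n = true := by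
  have hm : ∀ n : ℕ, MeasurableSet
      (Subtype.val '' {B : InfC | (ψ B).1 n = true} : Set (ℕ → Bool)) := by
    intro n
    apply MeasurableSet.subtype_image measurable_infinite
    exact ((measurable_pi_apply n).comp (measurable_subtype_coe.comp hψ))
      (measurableSet_singleton true)
  choose O hO hOe using fun n => (hm n).residualEq_isOpen
  have hres : ∀ᶠ x in residual (ℕ → Bool), (bset x).Infinite ∧
      ∀ n, (x ∈ Subtype.val '' {B : InfC | (ψ B).1 n = true} ↔ x ∈ O n) :=
    (show ∀ᶠ x in residual (ℕ → Bool), (bset x).Infinite from infinite_residual).and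
      (eventually_countable_forall.2 fun n => (hOe n).mem_iff)
  obtain ⟨t, hts, htG, htd⟩ := mem_residual.1 hres
  obtain ⟨U, hU, rfl⟩ := htG.eq_iInter_nat
  refine ⟨U, O, hU, hO, mem_residual.2 ⟨_, subset_rfl, htG, htd⟩, fun x hx => ?_⟩
  obtain ⟨h1, h2⟩ := hts hx
  refine ⟨h1, fun n => ?_⟩
  rw [← h2 n]
  constructor
  · rintro ⟨B, hB, rfl⟩
    exact hB
  · intro h
    exact ⟨⟨x, h1⟩, h, rfl⟩

/-- Eventually constant codes. -/
def evc (p : Finset ℕ × Bool) : ℕ → Bool := fun n => xor p.2 (decide (n ∈ p.1))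

lemma exists_translate {G : Set (ℕ → Bool)} (hG : G ∈ residual (ℕ → Bool)) :
    ∃ y, ∀ p, xorF (evc p) y ∈ G := by
  have h : ∀ p : Finset ℕ × Bool, ∀ᶠ y in residual (ℕ → Bool), xorF (evc p) y ∈ G := by
    intro p
    have hc : Continuous (xorF (evc p)) := by
      refine continuous_pi fun n => ?_
      exact (continuous_of_discreteTopology (f := fun b : Bool => xor (evc p n) b)).comp
        (continuous_apply n)
    have hi : ∀ y, xorF (evc p) (xorF (evc p) y) = y := by
      intro y; funext n; simp [xorF]
    let e : (ℕ → Bool) ≃ₜ (ℕ → Bool) :=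
      { toFun := xorF (evc p), invFun := xorF (evc p), left_inv := hi, right_inv := hi,
        continuous_toFun := hc, continuous_invFun := hc }
    exact tendsto_residual_of_isOpenMap e.continuous e.isOpenMap hG
  exact (dense_of_mem_residual (eventually_countable_forall.2 h)).nonempty

lemma exists_evc (N : ℕ) (z : ℕ → Bool) :
    ∃ p ∈ (Finset.range N).powerset ×ˢ (Finset.univ : Finset Bool),
      ∀ n, evc p n = z (min n N) := by
  refine ⟨((Finset.range N).filter (fun n => z n ≠ z N), z N), by simp, fun n => ?_⟩
  rcases lt_or_ge n N with h | h
  · rw [min_eq_left h.le]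
    simp only [evc, Finset.mem_filter, Finset.mem_range, h, true_and]
    cases z n <;> cases z N <;> simp
  · rw [min_eq_right h]
    simp [evc, Nat.not_lt.2 h]

lemma step (ψ : InfC → InfC) (hcen : Centered (Set.range ψ)) (U O : ℕ → Set (ℕ → Bool))
    (hU : ∀ n, IsOpen (U n)) (hO : ∀ n, IsOpen (O n))
    (hUO : ∀ x ∈ ⋂ n, U n, ∃ h : (bset x).Infinite, ∀ n, x ∈ O n ↔ (ψ ⟨x, h⟩).1 n = true)
    (y : ℕ → Bool) (hy : ∀ p, xorF (evc p) y ∈ ⋂ n, U n) (l N a₀ : ℕ) :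
    ∃ M a, N < M ∧ a₀ < a ∧ ∀ z : ℕ → Bool, (∀ n, N ≤ n → n < M → z n = z N) →
      xorF z y ∈ U l ∧ xorF z y ∈ O a := by
  classical
  choose hinf hOψ using fun p => hUO _ (hy p)
  let P := (Finset.range N).powerset ×ˢ (Finset.univ : Finset Bool)
  obtain ⟨a, ha, haa⟩ := (hcen (P.image fun p => ψ ⟨_, hinf p⟩)
    (by intro x hx; simp only [Finset.coe_image] at hx; obtain ⟨p, -, rfl⟩ := hx; exact ⟨_, rfl⟩)
    (Finset.Nonempty.image ⟨(∅, true), by simp [P]⟩ _)).exists_gt a₀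
  have hmem : ∀ p ∈ P, xorF (evc p) y ∈ U l ∩ O a := by
    intro p hp
    refine ⟨Set.mem_iInter.1 (hy p) l, (hOψ p a).2 ?_⟩
    exact Set.mem_iInter₂.1 ha _ (Finset.mem_image_of_mem _ hp)
  have hcyl : ∀ p, ∃ M, p ∈ P → ∀ w : ℕ → Bool, (∀ n < M, w n = xorF (evc p) y n) →
      w ∈ U l ∩ O a := by
    intro p
    by_cases hp : p ∈ P
    · obtain ⟨M, hM⟩ := exists_cyl ((hU l).inter (hO a)) (hmem p hp)
      exact ⟨M, fun _ => hM⟩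
    · exact ⟨0, fun h => absurd h hp⟩
  choose m hm using hcyl
  refine ⟨P.sup m + N + 1, a, by omega, haa, fun z hz => ?_⟩
  obtain ⟨p, hp, hpz⟩ := exists_evc N z
  refine hm p hp _ fun n hn => ?_
  have : m p ≤ P.sup m := Finset.le_sup (f := m) hp
  simp only [xorF, hpz]
  congr 1
  rcases lt_or_ge n N with h | h
  · rw [min_eq_left h.le]
  · rw [min_eq_right h]; exact hz n h (by omega)

lemma exists_split (N : ℕ → ℕ) (hN : StrictMono N) (y : ℕ → Bool) (X : Set ℕ)
    (hX : X.Infinite) :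
    ∃ z : ℕ → Bool, (∀ l n, N l ≤ n → n < N (l + 1) → z n = z (N l)) ∧
      SplitsSet (bset (xorF z y)) X := by
  classical
  let blk : ℕ → ℕ := fun n => Nat.findGreatest (fun l => N l ≤ n) n
  have hblk_ge : ∀ l n, N l ≤ n → l ≤ blk n := fun l n h =>
    Nat.le_findGreatest ((hN.le_apply).trans h) h
  have hblk : ∀ l n, N l ≤ n → n < N (l + 1) → blk n = l := by
    intro l n h1 h2
    have h3 : N (blk n) ≤ n := Nat.findGreatest_spec (P := fun l => N l ≤ n)
      ((hN.le_apply).trans h1) h1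
    have h4 := hN.lt_iff_lt.1 (h3.trans_lt h2)
    have := hblk_ge l n h1
    omega
  have htend : Tendsto blk atTop atTop :=
    tendsto_atTop.2 fun l => (eventually_ge_atTop (N l)).mono fun n => hblk_ge l n
  have he := Nat.nth_strictMono (p := (· ∈ X)) hX
  obtain ⟨θ, hθ, hθ2⟩ := strictMono_subseq_of_tendsto_atTop (htend.comp he.tendsto_atTop)
  let k : ℕ → ℕ := fun i => Nat.nth (· ∈ X) (θ i)
  have hk : StrictMono k := he.comp hθ
  have hkX : ∀ i, k i ∈ X := fun i => Nat.nth_mem_of_infinite (p := (· ∈ X)) hX _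
  let L : ℕ → ℕ := fun i => blk (k i)
  have hL : Function.Injective L := hθ2.injective
  let v : ℕ → Bool := Function.extend L (fun i => xor (decide (Even i)) (y (k i))) (fun _ => false)
  have hv : ∀ i, xorF (fun n => v (blk n)) y (k i) = decide (Even i) := by
    intro i
    have : v (blk (k i)) = xor (decide (Even i)) (y (k i)) := hL.extend_apply _ _ i
    simp [xorF, this]
  refine ⟨fun n => v (blk n), fun l n h1 h2 => ?_, ?_, ?_⟩
  · simp only [hblk l n h1 h2, hblk l (N l) le_rfl (hN (Nat.lt_succ_self l))]
  · refine Set.infinite_of_injective_forall_mem (f := fun i => k (2 * i))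
      (fun i j h => by have := hk.injective h; omega) fun i => ⟨hkX _, ?_⟩
    change xorF _ _ _ = true
    rw [hv]; simp
  · refine Set.infinite_of_injective_forall_mem (f := fun i => k (2 * i + 1))
      (fun i j h => by have := hk.injective h; omega) fun i => ⟨hkX _, ?_⟩
    change ¬ (xorF _ _ _ = true)
    rw [hv]; simp

/-- If `φ, ψ : [ω]^ω → [ω]^ω` satisfy (a) `ψ([ω]^ω)` is centered and
(b) `A ⊆* ψ(B)` implies `B` does not split `φ(A)`, then `φ` and `ψ` cannot
both be Borel.  (No Borel Tukey morphism from 𝔰 to 𝔭.) -/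
theorem stmt2 (φ ψ : InfC → InfC)
    (hcen : Centered (Set.range ψ))
    (hmor : ∀ A B : InfC, SubStar (bset A.1) (bset (ψ B).1) →
      ¬ SplitsSet (bset B.1) (bset (φ A).1)) :
    ¬ (Measurable φ ∧ Measurable ψ) := by
  rintro ⟨-, hψ⟩
  classical
  obtain ⟨U, O, hU, hO, hres, hUO⟩ := exists_generic ψ hψ
  obtain ⟨y, hy⟩ := exists_translate hres
  choose M a hM ha hMa using step ψ hcen U O hU hO hUO y hy
  let s : ℕ → ℕ × ℕ := fun l =>
    Nat.rec (0, 0) (fun l q => (M l q.1 q.2, a l q.1 q.2)) l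
  have hs : ∀ l, s (l + 1) = (M l (s l).1 (s l).2, a l (s l).1 (s l).2) := fun l => rfl
  have hN : StrictMono fun l => (s l).1 := strictMono_nat_of_lt_succ fun l => by
    rw [hs]; exact hM _ _ _
  have hA : StrictMono fun l => (s l).2 := strictMono_nat_of_lt_succ fun l => by
    rw [hs]; exact ha _ _ _
  let A : InfC := ⟨fun n => decide (∃ l, (s (l + 1)).2 = n),
    Set.infinite_of_injective_forall_mem (f := fun l => (s (l + 1)).2)
      (fun i j h => by have := hA.injective (a₁ := i + 1) (a₂ := j + 1) h; omega) fun l => by simp [bset]⟩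
  obtain ⟨z, hz, hsp⟩ := exists_split (fun l => (s l).1) hN y (bset (φ A).1) (φ A).2
  have key : ∀ l, xorF z y ∈ U l ∧ xorF z y ∈ O (s (l + 1)).2 := fun l => by
    have := hMa l (s l).1 (s l).2 z (hz l)
    simpa [hs] using this
  obtain ⟨hi, hiO⟩ := hUO (xorF z y) (Set.mem_iInter.2 fun l => (key l).1)
  refine hmor A ⟨_, hi⟩ ?_ hsp
  have : bset A.1 ⊆ bset (ψ ⟨_, hi⟩).1 := by
    intro n hn
    obtain ⟨l, rfl⟩ : ∃ l, (s (l + 1)).2 = n := by simpa [bset, A] using hn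
    exact (hiO _).1 (key l).2
  unfold SubStar
  rw [Set.sdiff_eq_empty.2 this]
  exact Set.finite_empty
end

section
/- There exist a continuous map ψ : ℕ^ℕ → [ω]^ω and a Borel map φ : [ω]^ω → ℕ^ℕ satisfying: (a) the family ψ(ℕ^ℕ) is centered, and (b) for every A ∈ [ω]^ω and every f ∈ ℕ^ℕ, if A ⊆* ψ(f) then f ≤* φ(A). (I.e., there is a Borel Tukey morphism witnessing 𝔟 ≥_BT 𝔭.) -/
open Filter

namespace BT

open Finset in
/-- strictly increasing function above `f` -/
def xs (f : ℕ → ℕ) (n : ℕ) : ℕ := ∑ j ∈ range (n + 1), (f j + 1)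

lemma xs_strict (f : ℕ → ℕ) : StrictMono (xs f) := by
  apply strictMono_nat_of_lt_succ
  intro n
  unfold xs
  rw [Finset.sum_range_succ _ (n + 1)]
  omega

lemma le_xs (f : ℕ → ℕ) (n : ℕ) : f n ≤ xs f n := by
  unfold xs
  rw [Finset.sum_range_succ]
  omega

lemma id_le_xs (f : ℕ → ℕ) (n : ℕ) : n ≤ xs f n := (xs_strict f).id_le n

/-- initial part below `i` of the range of a finite function -/
def T (i : ℕ) (v : Fin i → ℕ) : Finset ℕ := (Finset.univ.image v).filter (· < i)

/-- the part below `i` of the range of `xs f` -/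
def t (f : ℕ → ℕ) (i : ℕ) : Finset ℕ := T i (fun j => xs f j)

lemma mem_t (f : ℕ → ℕ) (i m : ℕ) : m ∈ t f i ↔ m < i ∧ ∃ n, xs f n = m := by
  simp only [t, T, Finset.mem_filter, Finset.mem_image, Finset.mem_univ, true_and]
  constructor
  · rintro ⟨⟨a, ha⟩, h⟩
    exact ⟨h, a, ha⟩
  · rintro ⟨h, n, hn⟩
    have := id_le_xs f n
    exact ⟨⟨⟨n, by omega⟩, hn⟩, h⟩

abbrev D := ℕ × Finset (Finset ℕ)

noncomputable def e : D ≃ ℕ := Denumerable.eqv D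

/-- antichains of finite subsets of `i` -/
def Valid (d : D) : Prop :=
  d.2 ⊆ (Finset.range d.1).powerset ∧
    ∀ s ∈ d.2, ∀ u ∈ d.2, ∀ j, s = u.filter (· < j) → s = u

def Q (f : ℕ → ℕ) (d : D) : Prop := Valid d ∧ t f d.1 ∈ d.2

open Classical in
noncomputable def raw (f : ℕ → ℕ) (k : ℕ) : Bool := decide (Q f (e.symm k))

lemma mem_raw (f : ℕ → ℕ) (k : ℕ) : k ∈ bset (raw f) ↔ Q f (e.symm k) := by
  simp [bset, raw]

lemma cont_raw : Continuous raw := by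
  classical
  apply continuous_pi
  intro k
  have h1 : Continuous (fun f : ℕ → ℕ => (fun j : Fin (e.symm k).1 => xs f j)) := by
    apply continuous_pi
    intro j
    unfold xs
    fun_prop
  have h2 : Continuous (fun v : Fin (e.symm k).1 → ℕ =>
      decide (Valid (e.symm k) ∧ T (e.symm k).1 v ∈ (e.symm k).2)) :=
    continuous_of_discreteTopology
  have h3 := h2.comp h1
  refine h3.congr fun f => ?_
  simp only [raw, Q, t, Function.comp]
  congr

lemma pair_ev (f f' : ℕ → ℕ) :
    ∀ᶠ i in atTop, ∀ j, t f i = (t f' i).filter (· < j) → t f i = t f' i := by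
  by_cases h : ∀ i, t f i = t f' i
  · exact Eventually.of_forall fun i j _ => h i
  · have : ∃ m, ¬ ((∃ n, xs f n = m) ↔ (∃ n, xs f' n = m)) := by
      by_contra! hc
      apply h
      intro i
      ext m
      rw [mem_t, mem_t, hc m]
    obtain ⟨m, hm⟩ := this
    filter_upwards [eventually_gt_atTop (xs f (m + 1))] with i hi j hj
    exfalso
    have hz := id_le_xs f (m + 1)
    have h1 : xs f (m + 1) ∈ t f i := (mem_t _ _ _).2 ⟨hi, _, rfl⟩
    rw [hj, Finset.mem_filter] at h1
    have h2 : m ∈ t f i ↔ m ∈ (t f' i).filter (· < j) := by rw [← hj]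
    rw [Finset.mem_filter, mem_t, mem_t] at h2
    have a1 : m < i := by omega
    have a2 : m < j := by omega
    simp only [a1, a2, true_and, and_true] at h2
    exact hm h2

lemma inf_raw (F : Finset (ℕ → ℕ)) : {k | ∀ f ∈ F, k ∈ bset (raw f)}.Infinite := by
  classical
  have hev : ∀ᶠ i in atTop, ∀ f ∈ F, ∀ f' ∈ F, ∀ j,
      t f i = (t f' i).filter (· < j) → t f i = t f' i := by
    rw [Filter.eventually_all_finset]
    intro f _
    rw [Filter.eventually_all_finset]
    intro f' _
    exact pair_ev f f'
  obtain ⟨i0, hi0⟩ := eventually_atTop.1 hev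
  have hinj : Set.InjOn (fun i : ℕ => e (i, F.image (fun f => t f i))) (Set.Ici i0) := by
    intro a _ b _ hab
    have := e.injective hab
    exact congrArg Prod.fst this
  refine ((Set.Ici_infinite i0).image hinj).mono ?_
  rintro _ ⟨i, hi, rfl⟩ f hf
  rw [mem_raw]
  simp only [Equiv.symm_apply_apply]
  refine ⟨⟨?_, ?_⟩, ?_⟩
  · intro s hs
    obtain ⟨g, _, rfl⟩ := Finset.mem_image.1 hs
    rw [Finset.mem_powerset]
    intro m hm
    exact Finset.mem_range.2 ((mem_t _ _ _).1 hm).1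
  · intro s hs u hu j hj
    obtain ⟨g, hg, rfl⟩ := Finset.mem_image.1 hs
    obtain ⟨g', hg', rfl⟩ := Finset.mem_image.1 hu
    exact hi0 i hi g hg g' hg' j hj
  · exact Finset.mem_image_of_mem _ hf

noncomputable def psi (f : ℕ → ℕ) : InfC :=
  ⟨raw f, by
    have := inf_raw {f}
    simpa using this⟩

def S (A : InfC) (y : ℕ) (s : Finset ℕ) : Set ℕ :=
  {i | y < i ∧ ∃ N : Finset (Finset ℕ), A.1 (e (i, N)) = true ∧ s ∉ N}

noncomputable def H (A : InfC) (y : ℕ) : ℕ :=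
  ∑ s ∈ (Finset.range (y + 1)).powerset, sInf (S A y s)

noncomputable def G (A : InfC) (y : ℕ) : ℕ := y + ∑ u ∈ Finset.range (y + 1), H A u

noncomputable def phi (A : InfC) (n : ℕ) : ℕ := (G A)^[n] n

lemma meas_mem (y : ℕ) (s : Finset ℕ) (i : ℕ) : MeasurableSet {A : InfC | i ∈ S A y s} := by
  have : {A : InfC | i ∈ S A y s} =
      ⋃ N : Finset (Finset ℕ), {A : InfC | A.1 (e (i, N)) = true} ∩ {_A | y < i ∧ s ∉ N} := by
    ext A
    simp only [S, Set.mem_setOf_eq, Set.mem_iUnion, Set.mem_inter_iff]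
    constructor
    · rintro ⟨h, N, h1, h2⟩
      exact ⟨N, h1, h, h2⟩
    · rintro ⟨N, h1, h, h2⟩
      exact ⟨h, N, h1, h2⟩
  rw [this]
  refine MeasurableSet.iUnion fun N => MeasurableSet.inter ?_ (MeasurableSet.const _)
  have hm : Measurable (fun A : InfC => A.1 (e (i, N))) :=
    (measurable_pi_apply _).comp measurable_subtype_coe
  exact hm (measurableSet_singleton true)

lemma meas_sInf (y : ℕ) (s : Finset ℕ) : Measurable (fun A : InfC => sInf (S A y s)) := by
  apply measurable_to_countable'
  intro k
  have : (fun A : InfC => sInf (S A y s)) ⁻¹' {k} =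
      ({A : InfC | k ∈ S A y s} ∩ ⋂ j : ℕ, ({A : InfC | j ∈ S A y s}ᶜ ∪ {_A | k ≤ j})) ∪
      ({_A | k = 0} ∩ ⋂ j : ℕ, {A : InfC | j ∈ S A y s}ᶜ) := by
    ext A
    simp only [Set.mem_preimage, Set.mem_singleton_iff, Set.mem_union, Set.mem_inter_iff,
      Set.mem_iInter, Set.mem_compl_iff, Set.mem_setOf_eq]
    constructor
    · rintro rfl
      rcases (S A y s).eq_empty_or_nonempty with h | h
      · right
        simp [h]
      · left
        refine ⟨Nat.sInf_mem h, fun j => ?_⟩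
        by_cases hj : j ∈ S A y s
        · exact Or.inr (Nat.sInf_le hj)
        · exact Or.inl hj
    · rintro (⟨h, h'⟩ | ⟨rfl, h⟩)
      · apply le_antisymm (Nat.sInf_le h)
        rcases h' (sInf (S A y s)) with h1 | h1
        · exact absurd (Nat.sInf_mem ⟨k, h⟩) h1
        · exact h1
      · rw [Set.eq_empty_of_forall_notMem h, Nat.sInf_empty]
  rw [this]
  refine MeasurableSet.union (MeasurableSet.inter (meas_mem _ _ _) (MeasurableSet.iInter fun j =>
    (meas_mem _ _ _).compl.union (MeasurableSet.const _))) (MeasurableSet.inter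
    (MeasurableSet.const _) (MeasurableSet.iInter fun j => (meas_mem _ _ _).compl))

lemma meas_G (y : ℕ) : Measurable (fun A : InfC => G A y) := by
  unfold G H
  refine measurable_const.add (Finset.measurable_fun_sum _ fun u _ =>
    Finset.measurable_fun_sum _ fun s _ => meas_sInf _ _)

lemma meas_iter (n m : ℕ) : Measurable (fun A : InfC => (G A)^[m] n) := by
  induction m with
  | zero => exact measurable_const
  | succ m ih =>
    simp only [Function.iterate_succ_apply']
    apply measurable_to_countable'
    intro k
    have : (fun A : InfC => G A ((G A)^[m] n)) ⁻¹' {k} =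
        ⋃ y : ℕ, (fun A : InfC => (G A)^[m] n) ⁻¹' {y} ∩ (fun A : InfC => G A y) ⁻¹' {k} := by
      ext A
      simp
    rw [this]
    exact MeasurableSet.iUnion fun y => (ih (measurableSet_singleton _)).inter
      (meas_G y (measurableSet_singleton _))

lemma meas_phi : Measurable phi := measurable_pi_lambda _ fun n => meas_iter n n

lemma G_mono (A : InfC) : Monotone (G A) := by
  intro a b h
  unfold G
  refine add_le_add h (Finset.sum_le_sum_of_subset ?_)
  exact Finset.range_mono (by omega)

lemma id_le_G (A : InfC) : id ≤ G A := fun y => Nat.le_add_right _ _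

lemma sInf_le_G (A : InfC) (y : ℕ) (s : Finset ℕ) (hs : s ⊆ Finset.range (y + 1)) :
    sInf (S A y s) ≤ G A y := by
  have h1 : sInf (S A y s) ≤ H A y :=
    Finset.single_le_sum (f := fun s => sInf (S A y s)) (fun _ _ => Nat.zero_le _)
      (Finset.mem_powerset.2 hs)
  have h2 : H A y ≤ ∑ u ∈ Finset.range (y + 1), H A u :=
    Finset.single_le_sum (f := fun u => H A u) (fun _ _ => Nat.zero_le _)
      (Finset.mem_range.2 (by omega))
  unfold G
  omega

lemma step (A : InfC) (f : ℕ → ℕ) (h : SubStar (bset A.1) (bset (raw f))) :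
    ∃ n0, ∀ n ≥ n0, xs f (n + 1) ≤ G A (xs f n) := by
  have hE : (bset A.1 \ bset (raw f)).Finite := h
  obtain ⟨i0, hi0⟩ := (hE.image (fun k => (e.symm k).1)).bddAbove
  have hQ : ∀ i N, i0 < i → A.1 (e (i, N)) = true → Q f (i, N) := by
    intro i N hi hA
    by_contra hc
    have : e (i, N) ∈ bset A.1 \ bset (raw f) := by
      refine ⟨hA, ?_⟩
      rw [mem_raw]
      simpa using hc
    have := hi0 (Set.mem_image_of_mem _ this)
    simp at this
    omega
  have hlarge : ∀ z, ∃ i N, z < i ∧ A.1 (e (i, N)) = true := by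
    intro z
    by_contra! hc
    apply A.2
    have hfin : (e '' (((Finset.range (z + 1)) ×ˢ
        (Finset.range (z + 1)).powerset.powerset : Finset D) : Set D)).Finite :=
      (Finset.finite_toSet _).image _
    refine (hE.union hfin).subset ?_
    intro k hk
    by_cases hk' : k ∈ bset (raw f)
    · right
      rw [mem_raw] at hk'
      refine ⟨e.symm k, ?_, by simp⟩
      have hle : (e.symm k).1 ≤ z := by
        by_contra hlt
        apply hc (e.symm k).1 (e.symm k).2 (by omega)
        simpa [bset] using hk
      simp only [Finset.coe_product, Set.mem_prod, Finset.mem_coe, Finset.mem_range,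
        Finset.mem_powerset]
      refine ⟨by omega, hk'.1.1.trans ?_⟩
      exact Finset.powerset_mono.2 (Finset.range_mono (by omega))
    · left
      exact ⟨hk, hk'⟩
  refine ⟨i0, fun n hn => ?_⟩
  have hy : i0 ≤ xs f n := hn.trans (id_le_xs f n)
  set y := xs f n with hydef
  set z := xs f (n + 1) with hzdef
  have hyz : y < z := xs_strict f (Nat.lt_succ_self n)
  have hgap : ∀ m, (∃ l, xs f l = m) → m < z → m ≤ y := by
    rintro _ ⟨l, rfl⟩ hl
    have := (xs_strict f).lt_iff_lt.1 hl
    exact (xs_strict f).monotone (by omega)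
  have hs : t f (y + 1) ⊆ Finset.range (y + 1) := by
    intro m hm
    exact Finset.mem_range.2 ((mem_t _ _ _).1 hm).1
  have hne : (S A y (t f (y + 1))).Nonempty := by
    obtain ⟨i, N, hi, hA⟩ := hlarge z
    refine ⟨i, by omega, N, hA, fun hmem => ?_⟩
    obtain ⟨⟨_, hv⟩, hin⟩ := hQ i N (by omega) hA
    have heq := hv _ hmem _ hin (y + 1) (by
      ext m
      simp only [Finset.mem_filter, mem_t]
      constructor
      · rintro ⟨h1, h2⟩
        exact ⟨⟨by omega, h2⟩, h1⟩
      · rintro ⟨⟨_, h2⟩, h1⟩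
        exact ⟨h1, h2⟩)
    have hz : z ∈ t f i := (mem_t _ _ _).2 ⟨hi, _, rfl⟩
    simp only at heq
    rw [← heq, mem_t] at hz
    omega
  refine le_trans ?_ (sInf_le_G A y _ hs)
  obtain ⟨h1, N, hA, hN⟩ := Nat.sInf_mem hne
  set i := sInf (S A y (t f (y + 1)))
  by_contra hlt
  obtain ⟨_, hin⟩ := hQ i N (by omega) hA
  apply hN
  convert hin using 1
  ext m
  simp only [mem_t]
  constructor
  · rintro ⟨a, b⟩
    exact ⟨by omega, b⟩
  · rintro ⟨a, b⟩
    have := hgap m b (by omega)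
    exact ⟨by omega, b⟩

lemma bound (A : InfC) (f : ℕ → ℕ) (h : SubStar (bset A.1) (bset (raw f))) :
    ∀ᶠ n in cofinite, f n ≤ phi A n := by
  obtain ⟨n0, hn0⟩ := step A f h
  have key : ∀ k, xs f (n0 + k) ≤ (G A)^[k] (xs f n0) := by
    intro k
    induction k with
    | zero => exact le_rfl
    | succ k ih =>
      rw [Function.iterate_succ_apply']
      exact (hn0 (n0 + k) (by omega)).trans (G_mono A ih)
  rw [Nat.cofinite_eq_atTop]
  filter_upwards [eventually_ge_atTop n0, eventually_ge_atTop (xs f n0)] with n h1 h2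
  have h3 := key (n - n0)
  rw [Nat.add_sub_cancel' h1] at h3
  calc f n ≤ xs f n := le_xs f n
    _ ≤ (G A)^[n - n0] (xs f n0) := h3
    _ ≤ (G A)^[n - n0] n := (G_mono A).iterate _ h2
    _ ≤ (G A)^[n] n := Function.monotone_iterate_of_id_le (id_le_G A) (Nat.sub_le _ _) n

lemma cent : Centered (Set.range psi) := by
  classical
  intro s hs _
  have : ∀ x : InfC, ∃ f, x ∈ s → psi f = x := by
    intro x
    by_cases hx : x ∈ s
    · obtain ⟨f, hf⟩ := hs hx
      exact ⟨f, fun _ => hf⟩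
    · exact ⟨0, fun h => absurd h hx⟩
  choose g hg using this
  refine (inf_raw (s.image g)).mono ?_
  intro k hk
  simp only [Set.mem_iInter]
  intro x hx
  have := hk (g x) (Finset.mem_image_of_mem g hx)
  rw [← hg x hx]
  exact this

end BT

/-- There exist a continuous `ψ : ℕ^ℕ → [ω]^ω` and a Borel `φ : [ω]^ω → ℕ^ℕ`
such that (a) `ψ(ℕ^ℕ)` is centered and (b) `A ⊆* ψ(f)` implies `f ≤* φ(A)`.
(A Borel Tukey morphism witnessing 𝔟 ≥_BT 𝔭.) -/
theorem stmt6 :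
    ∃ (ψ : (ℕ → ℕ) → InfC) (φ : InfC → (ℕ → ℕ)),
      Continuous ψ ∧ Measurable φ ∧
      Centered (Set.range ψ) ∧
      ∀ (A : InfC) (f : ℕ → ℕ), SubStar (bset A.1) (bset (ψ f).1) →
        ∀ᶠ n in cofinite, f n ≤ φ A n := by
  exact ⟨BT.psi, BT.phi, BT.cont_raw.subtype_mk _, BT.meas_phi, BT.cent,
    fun A f h => BT.bound A f h⟩
end

section
/- For every n ≥ 1 there exists a continuous function ψ_n : X_n → [ω]^ω, where X_n = {f ∈ ℕ^ℕ : f(k) ≤ 1 for all k ≥ n} with the subspace topology from ℕ^ℕ, such that: (i) for any f_1, …, f_n ∈ X_n, the intersection ψ_n(f_1) ∩ ⋯ ∩ ψ_n(f_n) is infinite; (ii) for any pairwise distinct f_1, …, f_{n+1} ∈ X_n, the intersection ψ_n(f_1) ∩ ⋯ ∩ ψ_n(f_{n+1}) is finite; and (iii) if f_1, …, f_{n+1} ∈ X_n have pairwise distinct restrictions to {0, 1, …, n−1}, then ψ_n(f_1) ∩ ⋯ ∩ ψ_n(f_{n+1}) = ∅. -/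
/-- `[T_n]`, the branches of the tree that is ω-branching for the first `n`
levels and binary branching afterwards, as a subspace of Baire space. -/
abbrev TreeSpace (n : ℕ) := {f : ℕ → ℕ // ∀ k, n ≤ k → f k ≤ 1}

namespace Stmt7Aux

/-- Index set: a level `m` and `n` strings of length `m` with entries at most `m`. -/
abbrev Code (n : ℕ) := Σ m : ℕ, (Fin n → Fin m → Fin (m + 1))

noncomputable instance (n : ℕ) : Encodable (Code n) := Encodable.ofCountable _

/-- `f` restricted to the level of `p` is one of the strings of `p`. -/
def Hit {n : ℕ} (f : ℕ → ℕ) (p : Code n) : Prop :=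
  n ≤ p.1 ∧ ∃ i, ∀ k : Fin p.1, (p.2 i k : ℕ) = f k

open Classical in
noncomputable def chi {n : ℕ} (f : ℕ → ℕ) : ℕ → Bool :=
  fun j => decide (∃ p : Code n, Encodable.encode p = j ∧ Hit f p)

lemma mem_chi {n : ℕ} (f : ℕ → ℕ) (j : ℕ) :
    j ∈ bset (chi (n := n) f) ↔ ∃ p : Code n, Encodable.encode p = j ∧ Hit f p := by
  simp [bset, chi]

lemma encode_mem_chi {n : ℕ} (f : ℕ → ℕ) (p : Code n) :
    Encodable.encode p ∈ bset (chi (n := n) f) ↔ Hit f p := by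
  rw [mem_chi]
  constructor
  · rintro ⟨q, hq, h⟩
    rwa [← Encodable.encode_injective hq]
  · exact fun h => ⟨p, rfl, h⟩

lemma continuous_chi (n : ℕ) : Continuous (fun f : ℕ → ℕ => chi (n := n) f) := by
  classical
  refine continuous_pi fun j => ?_
  by_cases hj : ∃ p : Code n, Encodable.encode p = j
  · obtain ⟨p, rfl⟩ := hj
    have h1 : Continuous (fun f : ℕ → ℕ => fun k : Fin p.1 => f k) := by fun_prop
    have h2 : Continuous (fun r : Fin p.1 → ℕ =>
        decide (n ≤ p.1 ∧ ∃ i, ∀ k : Fin p.1, (p.2 i k : ℕ) = r k)) :=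
      continuous_of_discreteTopology
    refine (h2.comp h1).congr fun f => ?_
    have := encode_mem_chi f p
    simp only [bset, Set.mem_setOf_eq, Hit] at this
    rw [Bool.eq_iff_iff, this]
    simp
  · have : (fun f : ℕ → ℕ => chi (n := n) f j) = fun _ => false := by
      funext f
      simp only [chi, decide_eq_false_iff_not]
      rintro ⟨p, hp, -⟩
      exact hj ⟨p, hp⟩
    rw [this]
    exact continuous_const

lemma inter_infinite {n : ℕ} (g : Fin n → TreeSpace n) :
    (⋂ i, bset (chi (n := n) (g i).1)).Infinite := by
  let B : ℕ := n + 1 + ∑ i, ∑ k ∈ Finset.range n, (g i).1 k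
  have hB : ∀ i k, (g i).1 k ≤ B := by
    intro i k
    by_cases hk : k < n
    · have h1 : (g i).1 k ≤ ∑ k ∈ Finset.range n, (g i).1 k :=
        Finset.single_le_sum (f := fun k => (g i).1 k) (fun _ _ => Nat.zero_le _)
          (Finset.mem_range.2 hk)
      have h2 : ∑ k ∈ Finset.range n, (g i).1 k ≤ ∑ i, ∑ k ∈ Finset.range n, (g i).1 k :=
        Finset.single_le_sum (f := fun i => ∑ k ∈ Finset.range n, (g i).1 k)
          (fun _ _ => Nat.zero_le _) (Finset.mem_univ i)
      omega
    · have := (g i).2 k (by omega)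
      omega
  let F : ℕ → Code n := fun t =>
    ⟨B + t, fun i k => ⟨(g i).1 k, by have := hB i k; omega⟩⟩
  refine Set.infinite_of_injective_forall_mem (f := fun t => Encodable.encode (F t)) ?_ ?_
  · intro a b h
    have h1 := congrArg Sigma.fst (Encodable.encode_injective h)
    simpa [F] using h1
  · intro t
    refine Set.mem_iInter.2 fun i => ?_
    rw [encode_mem_chi]
    exact ⟨by simp only [F]; omega, i, fun k => rfl⟩

lemma collide {n : ℕ} (g : Fin (n + 1) → TreeSpace n) (j : ℕ) (hn : 1 ≤ n)
    (hj : j ∈ ⋂ i, bset (chi (n := n) (g i).1)) :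
    ∃ p : Code n, Encodable.encode p = j ∧ n ≤ p.1 ∧
      ∃ a b, a ≠ b ∧ ∀ k < p.1, (g a).1 k = (g b).1 k := by
  rw [Set.mem_iInter] at hj
  obtain ⟨p, rfl, -⟩ := (mem_chi _ _).1 (hj 0)
  have h : ∀ i, Hit (g i).1 p := fun i => (encode_mem_chi _ _).1 (hj i)
  choose c hc using fun i => (h i).2
  obtain ⟨a, b, hab, he⟩ := Fintype.exists_ne_map_eq_of_card_lt c (by simp)
  refine ⟨p, rfl, (h 0).1, a, b, hab, fun k hk => ?_⟩
  rw [← hc a ⟨k, hk⟩, ← hc b ⟨k, hk⟩, he]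

end Stmt7Aux

open Stmt7Aux in
/-- For every `n ≥ 1` there is a continuous `ψ_n : [T_n] → [ω]^ω` such that:
(i) any `n` values have infinite intersection, (ii) any `n+1` distinct values
have finite intersection, and (iii) any `n+1` values coming from branches with
pairwise distinct restrictions to `{0, …, n−1}` have empty intersection. -/
theorem stmt7 :
    ∀ n : ℕ, 1 ≤ n →
    ∃ ψ : TreeSpace n → InfC,
      Continuous ψ ∧
      (∀ g : Fin n → TreeSpace n, (⋂ i, bset (ψ (g i)).1).Infinite) ∧
      (∀ g : Fin (n + 1) → TreeSpace n, Function.Injective g →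
        (⋂ i, bset (ψ (g i)).1).Finite) ∧
      (∀ g : Fin (n + 1) → TreeSpace n,
        (∀ i j, i ≠ j → ∃ k < n, (g i).1 k ≠ (g j).1 k) →
        (⋂ i, bset (ψ (g i)).1) = ∅) := by
  intro n hn
  refine ⟨fun f => ⟨chi (n := n) f.1, ?_⟩, ?_, ?_, ?_, ?_⟩
  · have := inter_infinite (fun _ : Fin n => f)
    exact this.mono (Set.iInter_subset _ (⟨0, hn⟩ : Fin n))
  · exact ((continuous_chi n).comp continuous_subtype_val).subtype_mk _
  · exact fun g => inter_infinite g
  · intro g hg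
    have hd : ∀ a b, ∃ k, a ≠ b → (g a).1 k ≠ (g b).1 k := by
      intro a b
      by_cases hab : a = b
      · exact ⟨0, fun h => absurd hab h⟩
      · have h1 : (g a).1 ≠ (g b).1 := fun h => hab (hg (Subtype.ext h))
        obtain ⟨k, hk⟩ := Function.ne_iff.1 h1
        exact ⟨k, fun _ => hk⟩
    choose d hd using hd
    let N : ℕ := ∑ a, ∑ b, d a b
    have hN : ∀ a b, d a b ≤ N := by
      intro a b
      have h1 : d a b ≤ ∑ b, d a b :=
        Finset.single_le_sum (f := fun b => d a b) (fun _ _ => Nat.zero_le _) (Finset.mem_univ b)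
      have h2 : ∑ b, d a b ≤ ∑ a, ∑ b, d a b :=
        Finset.single_le_sum (f := fun a => ∑ b, d a b)
          (fun _ _ => Nat.zero_le _) (Finset.mem_univ a)
      omega
    have hfin : (⋃ m ∈ Set.Iic N, Set.range
        (fun s : Fin n → Fin m → Fin (m + 1) => Encodable.encode (⟨m, s⟩ : Code n))).Finite :=
      (Set.finite_Iic N).biUnion fun m _ => Set.finite_range _
    refine hfin.subset fun j hj => ?_
    obtain ⟨p, rfl, -, a, b, hab, h⟩ := collide g j hn hj
    have hp : p.1 ≤ N := by
      by_contra hlt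
      have := hN a b
      exact hd a b hab (h _ (by omega))
    exact Set.mem_biUnion hp ⟨p.2, rfl⟩
  · intro g hg
    refine Set.eq_empty_of_forall_notMem fun j hj => ?_
    obtain ⟨p, rfl, hp, a, b, hab, h⟩ := collide g j hn hj
    obtain ⟨k, hk, hne⟩ := hg a b hab
    exact hne (h k (by omega))
end

section
/- There exists a continuous function ψ : ℕ^ℕ → [ω]^ω such that: (a) the family ψ(ℕ^ℕ) is centered (for any finitely many f_1, …, f_k ∈ ℕ^ℕ, the intersection ψ(f_1) ∩ ⋯ ∩ ψ(f_k) is infinite), and (b) for every set S ⊆ ℕ^ℕ that is unbounded with respect to everywhere domination (i.e., there is no g ∈ ℕ^ℕ with f(k) ≤ g(k) for every f ∈ S and every k ∈ ℕ), the intersection ⋂_{f ∈ S} ψ(f) is finite. In particular, for every A ∈ [ω]^ω the set {f ∈ ℕ^ℕ : A ⊆* ψ(f)} is ≤*-bounded. -/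
open Filter

namespace Stmt8Aux

open Classical

/-- Extend a finite sequence by zeros. -/
noncomputable def ext0 (N : ℕ) (v : Fin N → ℕ) (i : ℕ) : ℕ := if h : i < N then v ⟨i, h⟩ else 0

/-- Length of the longest initial segment of length at most `N` with values at most `N`. -/
noncomputable def L (N : ℕ) (v : Fin N → ℕ) : ℕ :=
  Nat.findGreatest (fun m => ∀ i < m, ext0 N v i ≤ N) N

/-- The longest initial segment of length at most `N` with values at most `N`. -/
noncomputable def T (N : ℕ) (v : Fin N → ℕ) : List ℕ := (List.range (L N v)).map (ext0 N v)

/-- Restriction. -/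
def res (N : ℕ) (f : ℕ → ℕ) : Fin N → ℕ := fun i => f i

lemma ext0_res {N i : ℕ} (f : ℕ → ℕ) (h : i < N) : ext0 N (res N f) i = f i := by
  simp [ext0, res, h]

lemma T_length (N : ℕ) (v : Fin N → ℕ) : (T N v).length = L N v := by simp [T]

lemma L_le (N : ℕ) (v : Fin N → ℕ) : L N v ≤ N := Nat.findGreatest_le N

lemma L_spec (N : ℕ) (v : Fin N → ℕ) : ∀ i < L N v, ext0 N v i ≤ N :=
  Nat.findGreatest_spec (P := fun m => ∀ i < m, ext0 N v i ≤ N) (m := 0) (Nat.zero_le N)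
    (by simp)

lemma le_L {N r : ℕ} (f : ℕ → ℕ) (h : r ≤ N) (hf : ∀ i < r, f i ≤ N) : r ≤ L N (res N f) := by
  refine Nat.le_findGreatest h ?_
  intro i hi
  rw [ext0_res f (by omega)]
  exact hf i hi

lemma le_of_lt_L {N k : ℕ} (f : ℕ → ℕ) (h : k < L N (res N f)) : f k ≤ N := by
  have h1 := L_spec N (res N f) k h
  have h2 := L_le N (res N f)
  rwa [ext0_res f (by omega)] at h1

lemma T_get {N k : ℕ} (f : ℕ → ℕ) (h : k < L N (res N f)) : (T N (res N f))[k]? = some (f k) := by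
  have h2 := L_le N (res N f)
  simp [T, h, ext0_res f (show k < N by omega)]

/-- The basic relation. -/
def R (p : ℕ × Finset (List ℕ)) (v : Fin p.1 → ℕ) : Prop :=
  T p.1 v ∈ p.2 ∧ ∀ s ∈ p.2, p.2.card ≤ s.length + 1 ∧ s.length ≤ p.1 ∧ ∀ x ∈ s, x ≤ p.1

noncomputable def code : ℕ × Finset (List ℕ) ≃ ℕ := Denumerable.eqv _

/-- The set attached to `f`, as a characteristic function. -/
noncomputable def W (f : ℕ → ℕ) (n : ℕ) : Bool :=
  decide (R (code.symm n) (res (code.symm n).1 f))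

lemma mem_W (f : ℕ → ℕ) (n : ℕ) :
    n ∈ bset (W f) ↔ R (code.symm n) (res (code.symm n).1 f) := by
  simp [bset, W]

lemma continuous_W : Continuous W := by
  refine continuous_pi fun n => ?_
  have h1 : Continuous (fun v : Fin (code.symm n).1 → ℕ => decide (R (code.symm n) v)) :=
    continuous_of_discreteTopology
  have h2 : Continuous (res (code.symm n).1) := by
    unfold res; fun_prop
  exact h1.comp h2

lemma exists_bound (s : Finset (ℕ → ℕ)) (r : ℕ) :
    ∃ N₀, ∀ N ≥ N₀, ∀ f ∈ s, r ≤ L N (res N f) := by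
  refine ⟨r + ∑ f ∈ s, ∑ i ∈ Finset.range r, f i, fun N hN f hf => le_L f (by omega) ?_⟩
  intro i hi
  have h1 : f i ≤ ∑ i ∈ Finset.range r, f i :=
    Finset.single_le_sum (f := fun i => f i) (fun _ _ => Nat.zero_le _) (Finset.mem_range.2 hi)
  have h2 : ∑ i ∈ Finset.range r, f i ≤ ∑ f ∈ s, ∑ i ∈ Finset.range r, f i :=
    Finset.single_le_sum (f := fun f : ℕ → ℕ => ∑ i ∈ Finset.range r, f i)
      (fun _ _ => Nat.zero_le _) hf
  omega

lemma centered (s : Finset (ℕ → ℕ)) : (⋂ f ∈ s, bset (W f)).Infinite := by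
  obtain ⟨N₀, hN₀⟩ := exists_bound s s.card
  refine Set.infinite_of_injective_forall_mem
    (f := fun m : ℕ => code (m + N₀, s.image fun f => T (m + N₀) (res (m + N₀) f))) ?_ ?_
  · intro a b h
    have := congrArg Prod.fst (code.injective h)
    simpa using this
  · intro m
    simp only [Set.mem_iInter]
    intro f hf
    rw [mem_W, Equiv.symm_apply_apply]
    refine ⟨Finset.mem_image_of_mem _ hf, ?_⟩
    intro t ht
    obtain ⟨g, hg, rfl⟩ := Finset.mem_image.1 ht
    have h1 := hN₀ (m + N₀) (by omega) g hg
    have h2 := Finset.card_image_le (s := s) (f := fun f => T (m + N₀) (res (m + N₀) f))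
    refine ⟨?_, ?_, ?_⟩
    · rw [T_length]; exact h2.trans (h1.trans (Nat.le_succ _))
    · rw [T_length]; exact L_le _ _
    · intro x hx
      obtain ⟨i, hi, rfl⟩ := List.mem_map.1 hx
      exact L_spec _ _ i (List.mem_range.1 hi)

lemma finite_lists (N : ℕ) : {l : List ℕ | l.length ≤ N ∧ ∀ x ∈ l, x ≤ N}.Finite := by
  refine ((List.finite_length_le (Fin (N + 1)) N).image (List.map Fin.val)).subset ?_
  rintro l ⟨h1, h2⟩
  refine ⟨l.map (Fin.ofNat (N + 1)), by simpa using h1, ?_⟩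
  rw [List.map_map]
  conv_rhs => rw [← List.map_id l]
  refine List.map_congr_left fun x hx => ?_
  have := h2 x hx
  simp [Fin.ofNat, Nat.mod_eq_of_lt (Nat.lt_succ_of_le this)]

lemma finite_below (N : ℕ) (f : ℕ → ℕ) : {n ∈ bset (W f) | (code.symm n).1 ≤ N}.Finite := by
  have hfin : (Set.Iic N ×ˢ {F : Finset (List ℕ) | F ⊆ (finite_lists N).toFinset}).Finite := by
    refine (Set.finite_Iic N).prod ?_
    exact ((finite_lists N).toFinset.powerset.finite_toSet).subset fun F hF => by simpa using hF
  refine (hfin.image code).subset ?_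
  rintro n ⟨h1, h2⟩
  rw [mem_W] at h1
  refine ⟨code.symm n, ⟨h2, ?_⟩, by simp⟩
  intro t ht
  have := h1.2 t ht
  simp only [Set.Finite.mem_toFinset, Set.mem_setOf_eq]
  exact ⟨this.2.1.trans h2, fun x hx => (this.2.2 x hx).trans h2⟩

lemma finite_inter (S : Set (ℕ → ℕ)) (hS : ¬ ∃ g : ℕ → ℕ, ∀ f ∈ S, ∀ k, f k ≤ g k) :
    (⋂ f ∈ S, bset (W f)).Finite := by
  by_contra hinf
  apply hS
  suffices h : ∀ k, ∃ b, ∀ f ∈ S, f k ≤ b by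
    choose g hg using h
    exact ⟨g, fun f hf k => hg k f hf⟩
  intro k
  by_contra hk
  push Not at hk
  have himg : ((fun f : ℕ → ℕ => f k) '' S).Infinite := by
    refine Set.infinite_of_forall_exists_gt fun b => ?_
    obtain ⟨f, hf, hb⟩ := hk b
    exact ⟨f k, ⟨f, hf, rfl⟩, hb⟩
  obtain ⟨D, hD, hcard⟩ := himg.exists_subset_card_eq (k + 2)
  obtain ⟨s, hsS, hsD⟩ := Finset.subset_set_image_iff.1 hD
  obtain ⟨N₀, hN₀⟩ := exists_bound s (k + 1)
  obtain ⟨f₀, hf₀, -⟩ := hk 0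
  have hex : ∃ n ∈ ⋂ f ∈ S, bset (W f), N₀ < (code.symm n).1 := by
    by_contra hno
    push Not at hno
    refine hinf ((finite_below N₀ f₀).subset fun n hn => ⟨?_, hno n hn⟩)
    exact Set.mem_iInter₂.1 hn f₀ hf₀
  obtain ⟨n, hn, hN⟩ := hex
  have hR : ∀ f ∈ S, R (code.symm n) (res (code.symm n).1 f) := fun f hf =>
    (mem_W f n).1 (Set.mem_iInter₂.1 hn f hf)
  generalize code.symm n = p at hN hR
  obtain ⟨f, hf, hfk⟩ := hk p.1
  have h1 : p.2.card ≤ k + 1 := by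
    have h2 := ((hR f hf).2 _ (hR f hf).1).1
    rw [T_length] at h2
    by_contra hc
    have := le_of_lt_L (N := p.1) (k := k) f (by omega)
    omega
  have h3 : D.card ≤ p.2.card := by
    have hsub : D.image some ⊆ p.2.image (fun l => l[k]?) := by
      intro x hx
      obtain ⟨y, hy, rfl⟩ := Finset.mem_image.1 hx
      rw [← hsD] at hy
      obtain ⟨g, hg, rfl⟩ := Finset.mem_image.1 hy
      refine Finset.mem_image.2 ⟨_, (hR g (hsS hg)).1, ?_⟩
      exact T_get g (hN₀ p.1 hN.le g hg)
    have h4 := Finset.card_le_card hsub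
    rw [Finset.card_image_of_injective _ (Option.some_injective _)] at h4
    exact h4.trans Finset.card_image_le
  omega

end Stmt8Aux

/-- There is a continuous `ψ : ℕ^ℕ → [ω]^ω` such that (a) `ψ(ℕ^ℕ)` is centered:
any finitely many values have infinite intersection, and (b) for every
`S ⊆ ℕ^ℕ` unbounded with respect to everywhere domination, `⋂_{f ∈ S} ψ(f)` is
finite.  In particular, for every `A ∈ [ω]^ω` the set
`{f : A ⊆* ψ(f)}` is `≤*`-bounded. -/
theorem stmt8 :
    ∃ ψ : (ℕ → ℕ) → InfC,
      Continuous ψ ∧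
      (∀ s : Finset (ℕ → ℕ), s.Nonempty → (⋂ f ∈ s, bset (ψ f).1).Infinite) ∧
      (∀ S : Set (ℕ → ℕ), (¬ ∃ g : ℕ → ℕ, ∀ f ∈ S, ∀ k, f k ≤ g k) →
        (⋂ f ∈ S, bset (ψ f).1).Finite) ∧
      (∀ A : InfC, ∃ g : ℕ → ℕ, ∀ f : ℕ → ℕ,
        SubStar (bset A.1) (bset (ψ f).1) → ∀ᶠ n in cofinite, f n ≤ g n) := by
  have hinf : ∀ f, (bset (Stmt8Aux.W f)).Infinite := fun f => by
    simpa using Stmt8Aux.centered {f}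
  refine ⟨fun f => ⟨Stmt8Aux.W f, hinf f⟩, Stmt8Aux.continuous_W.subtype_mk _,
    fun s _ => Stmt8Aux.centered s, fun S hS => Stmt8Aux.finite_inter S hS, ?_⟩
  intro A
  have hb : ∀ m : ℕ, ∃ g : ℕ → ℕ, ∀ f : ℕ → ℕ,
      (∀ n ∈ bset A.1, m ≤ n → n ∈ bset (Stmt8Aux.W f)) → ∀ k, f k ≤ g k := by
    intro m
    by_contra hno
    have hfin := Stmt8Aux.finite_inter
      {f | ∀ n ∈ bset A.1, m ≤ n → n ∈ bset (Stmt8Aux.W f)} hno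
    refine A.2 ((hfin.union (Set.finite_Iio m)).subset ?_)
    intro n hn
    rcases lt_or_ge n m with h | h
    · exact Or.inr h
    · exact Or.inl (Set.mem_iInter₂.2 fun f hf => hf n hn h)
  choose g hg using hb
  refine ⟨fun n => ∑ m ∈ Finset.range (n + 1), g m n, fun f hf => ?_⟩
  obtain ⟨m, hm⟩ := Set.Finite.bddAbove hf
  rw [Nat.cofinite_eq_atTop]
  filter_upwards [eventually_ge_atTop (m + 1)] with n hn
  refine (hg (m + 1) f ?_ n).trans ?_
  · intro i hi hmi
    by_contra hc
    have := hm ⟨hi, hc⟩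
    omega
  · exact Finset.single_le_sum (f := fun m => g m n) (fun _ _ => Nat.zero_le _)
      (Finset.mem_range.2 (by omega))
end

section
/- There do not exist Borel maps φ : ℕ^ℕ → IC and ψ : IC → ℕ^ℕ such that for every f ∈ ℕ^ℕ and every A ∈ IC, if φ(f) does not split A (i.e., A ∩ φ(f) is finite or A ∖ φ(f) is finite) then f ≤* ψ(A). (I.e., there is no Borel Tukey morphism from the independence number 𝔦, nor from the unsplitting number 𝔯, to the dominating number 𝔡.) -/
open Filter

/-- `IC`: the infinite/co-infinite subsets of ℕ, regarded as a subspace of the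
Cantor space via characteristic functions. -/
abbrev ICC := {x : ℕ → Bool // (bset x).Infinite ∧ ((bset x)ᶜ : Set ℕ).Infinite}

lemma coord_isOpen (i n : ℕ) : IsOpen {f : ℕ → ℕ | f i = n} := by
  have hc : Continuous fun f : ℕ → ℕ => f i := continuous_apply i
  exact (isOpen_discrete ({n} : Set ℕ)).preimage hc

/-- Basic clopen set of functions extending the finite sequence `s`. -/
def cyl (s : List ℕ) : Set (ℕ → ℕ) := {f | ∀ i < s.length, f i = s.getD i 0}

/-- `t` extends `s`. -/
def NodeExt (s t : List ℕ) : Prop := s.length ≤ t.length ∧ cyl t ⊆ cyl s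

lemma NodeExt.rfl' (s : List ℕ) : NodeExt s s := ⟨le_rfl, subset_rfl⟩

lemma NodeExt.trans' {s t u : List ℕ} (h : NodeExt s t) (h' : NodeExt t u) : NodeExt s u :=
  ⟨h.1.trans h'.1, h'.2.trans h.2⟩

lemma cyl_isOpen (s : List ℕ) : IsOpen (cyl s) := by
  have : cyl s = ⋂ i ∈ Finset.range s.length, {f : ℕ → ℕ | f i = s.getD i 0} := by
    ext f; simp [cyl]
  rw [this]
  refine isOpen_biInter_finset fun i _ => ?_
  exact coord_isOpen _ _

lemma cyl_nhds (O : Set (ℕ → ℕ)) (hO : IsOpen O) (x : ℕ → ℕ) (hx : x ∈ O) (m : ℕ) :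
    ∃ t : List ℕ, m ≤ t.length ∧ cyl t ⊆ O ∧ x ∈ cyl t := by
  obtain ⟨I, u, hu, hsub⟩ := isOpen_pi_iff.1 hO x hx
  refine ⟨(List.range (max m (I.sup id + 1))).map x, by simp, ?_, ?_⟩
  · intro f hf
    apply hsub
    intro i hi
    have h1 : i < I.sup id + 1 := Nat.lt_succ_of_le (Finset.le_sup (f := id) hi)
    have h2 : i < max m (I.sup id + 1) := lt_of_lt_of_le h1 (le_max_right _ _)
    have := hf i (by simpa using h2)
    rw [this]
    simp only [List.getD_eq_getElem?_getD, List.getElem?_map, List.getElem?_range h2]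
    exact (hu i hi).2
  · intro i hi
    have h2 : i < max m (I.sup id + 1) := by simpa using hi
    simp only [List.getD_eq_getElem?_getD, List.getElem?_map, List.getElem?_range h2]
    rfl

/-- Limit set of a node. -/
def Lim (P : (ℕ → ℕ) → Set ℕ) (x : List ℕ → ℕ → (ℕ → ℕ)) (s : List ℕ) : Set ℕ :=
  {i | ∀ᶠ n in (hyperfilter ℕ : Filter ℕ), i ∈ P (x s n)}

lemma exists_big_mem (B : Set ℕ) (hB : B ∈ (hyperfilter ℕ : Filter ℕ)) (m : ℕ) :
    ∃ a ∈ B, m ≤ a := by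
  have h2 : {a : ℕ | m ≤ a} ∈ (hyperfilter ℕ : Filter ℕ) := by
    apply hyperfilter_le_cofinite
    rw [Nat.cofinite_eq_atTop]
    exact eventually_ge_atTop m
  obtain ⟨a, ha⟩ := (hyperfilter ℕ : Filter ℕ).nonempty_of_mem (inter_mem hB h2)
  exact ⟨a, ha.1, ha.2⟩

lemma limit_fun (s : ℕ → List ℕ) (hs : ∀ j, NodeExt (s j) (s (j+1)))
    (hl : ∀ j, (s j).length < (s (j+1)).length) (hne : ∀ j, (cyl (s j)).Nonempty) :
    ∃ f, ∀ j, f ∈ cyl (s j) := by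
  have hmono : ∀ i j, i ≤ j → NodeExt (s i) (s j) := by
    intro i j hij
    induction j, hij using Nat.le_induction with
    | base => exact NodeExt.rfl' _
    | succ j _ ih => exact ih.trans' (hs j)
  have hlen : StrictMono fun j => (s j).length := strictMono_nat_of_lt_succ hl
  refine ⟨fun i => (s (i+1)).getD i 0, fun j i hi => ?_⟩
  obtain ⟨y, hy⟩ := hne (max j (i+1))
  have h1 := (hmono j _ (le_max_left _ _)).2 hy i hi
  have h2 := (hmono (i+1) _ (le_max_right j _)).2 hy i
    (lt_of_lt_of_le (Nat.lt_succ_self i) (hlen.id_le (i+1)))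
  exact h2.symm.trans h1

lemma core (P : (ℕ → ℕ) → Set ℕ) (D U : ℕ → Set (ℕ → ℕ)) (hD : ∀ k, IsOpen (D k))
    (hU : ∀ k, IsOpen (U k)) (hP : ∀ f, (∀ k, f ∈ D k) → ∀ i, i ∈ P f ↔ f ∈ U i)
    (x : List ℕ → ℕ → (ℕ → ℕ)) (hxD : ∀ s n k, x s n ∈ D k) (hxc : ∀ s n, x s n ∈ cyl s)
    (hxn : ∀ s n, x s n s.length = n) (s0 : List ℕ)
    (h : ∀ s, NodeExt s0 s → ∃ t, NodeExt s t ∧ Lim P x t ∈ (hyperfilter ℕ : Filter ℕ)) :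
    ∃ A : Set ℕ, A.Infinite ∧ ∀ g : ℕ → ℕ, ∃ f, A ⊆ P f ∧ ∃ᶠ n in atTop, g n < f n := by
  have step : ∀ (s : List ℕ) (k : ℕ) (F : Finset ℕ), ∃ t,
      Lim P x t ∈ (hyperfilter ℕ : Filter ℕ) ∧ (NodeExt s0 s → (F : Set ℕ) ⊆ Lim P x s →
        NodeExt s t ∧ s.length < t.length ∧ (F : Set ℕ) ⊆ Lim P x t ∧
        ∀ f ∈ cyl t, k ≤ f s.length ∧ (∀ j ≤ k, f ∈ D j) ∧ ∀ a ∈ F, f ∈ U a) := by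
    intro s k F
    by_cases hc : NodeExt s0 s ∧ (F : Set ℕ) ⊆ Lim P x s
    swap
    · obtain ⟨t, -, ht⟩ := h s0 (NodeExt.rfl' _)
      exact ⟨t, ht, fun h1 h2 => absurd ⟨h1, h2⟩ hc⟩
    obtain ⟨hs, hF⟩ := hc
    have hev : {n | ∀ a ∈ F, a ∈ P (x s n)} ∈ (hyperfilter ℕ : Filter ℕ) := by
      have : ∀ᶠ n in (hyperfilter ℕ : Filter ℕ), ∀ a ∈ F, a ∈ P (x s n) :=
        (Filter.eventually_all_finset F).2 fun a ha => hF ha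
      exact this
    obtain ⟨n, hn, hkn⟩ := exists_big_mem _ hev k
    have hO : IsOpen (cyl s ∩ {f : ℕ → ℕ | f s.length = n} ∩
        ((⋂ j ∈ Finset.range (k+1), D j) ∩ ⋂ a ∈ F, U a)) := by
      refine ((cyl_isOpen s).inter ?_).inter
        ((isOpen_biInter_finset fun j _ => hD j).inter (isOpen_biInter_finset fun j _ => hU j))
      exact coord_isOpen _ _
    obtain ⟨t, hlt, htO, -⟩ := cyl_nhds _ hO (x s n) (by
      refine ⟨⟨hxc s n, hxn s n⟩, ?_, ?_⟩
      · simp only [Set.mem_iInter]; intro j _; exact hxD s n j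
      · simp only [Set.mem_iInter]; intro a ha
        exact (hP _ (hxD s n) a).1 (hn a ha)) (s.length + 1)
    have hst : NodeExt s t := ⟨by omega, fun f hf => (htO hf).1.1⟩
    obtain ⟨t', htt', hL⟩ := h t (hs.trans' hst)
    have hlast : ∀ f ∈ cyl t', k ≤ f s.length ∧ (∀ j ≤ k, f ∈ D j) ∧ ∀ a ∈ F, f ∈ U a := by
      intro f hf
      have := htO (htt'.2 hf)
      obtain ⟨⟨-, h2⟩, h3, h4⟩ := this
      simp only [Set.mem_iInter, Finset.mem_range] at h3 h4
      refine ⟨?_, fun j hj => h3 j (by omega), h4⟩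
      have h2' : f s.length = n := h2
      omega
    refine ⟨t', hL, fun _ _ => ⟨hst.trans' htt', ?_, ?_, hlast⟩⟩
    · have := htt'.1; omega
    · intro a ha
      refine Filter.Eventually.of_forall fun n => ?_
      exact (hP _ (hxD _ _) a).2 ((hlast _ (hxc t' n)).2.2 a ha)
  choose T hTW hT using step
  obtain ⟨t0, ht0, ht0W⟩ := h s0 (NodeExt.rfl' _)
  obtain ⟨e, he⟩ := exists_surjective_nat (List ℕ)
  let St := Finset ℕ × {B : Set ℕ // B ∈ (hyperfilter ℕ : Filter ℕ)}
  have hR : ∀ (k : ℕ) (S : St), ∃ S' : St, S'.2.1 ⊆ S.2.1 ∧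
      (∀ j ≤ k, S'.2.1 ⊆ Lim P x (T (e j) k S.1)) ∧
      ∃ a ∈ S'.2.1, (∀ b ∈ S.1, b < a) ∧ S'.1 = insert a S.1 := by
    intro k S
    have hB : S.2.1 ∩ (⋂ j ∈ Finset.range (k+1), Lim P x (T (e j) k S.1))
        ∈ (hyperfilter ℕ : Filter ℕ) :=
      inter_mem S.2.2 ((Filter.biInter_finset_mem _).2 fun j _ => hTW _ _ _)
    obtain ⟨a, ha, ham⟩ := exists_big_mem _ hB (S.1.sup id + 1)
    refine ⟨(insert a S.1, ⟨_, hB⟩), Set.inter_subset_left, ?_, a, ha, ?_, rfl⟩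
    · intro j hj i hi
      have := hi.2
      simp only [Set.mem_iInter, Finset.mem_range] at this
      exact this j (by omega)
    · intro b hb
      have : b ≤ S.1.sup id := Finset.le_sup (f := id) hb
      omega
  choose nxt hn1 hn2 hn3 using hR
  let S : ℕ → St := fun n => Nat.rec (∅, ⟨Lim P x t0, ht0W⟩) (fun k s => nxt k s) n
  have hS0 : S 0 = (∅, ⟨Lim P x t0, ht0W⟩) := rfl
  have hSs : ∀ k, S (k+1) = nxt k (S k) := fun k => rfl
  clear_value S
  let F : ℕ → Finset ℕ := fun k => (S k).1
  let B : ℕ → Set ℕ := fun k => (S k).2.1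
  have hB1 : ∀ k, B (k+1) ⊆ B k := fun k => by
    have := hn1 k (S k); rw [← hSs] at this; exact this
  have hB2 : ∀ k, ∀ j ≤ k, B (k+1) ⊆ Lim P x (T (e j) k (F k)) := fun k => by
    have := hn2 k (S k); rw [← hSs] at this; exact this
  have hF1 : ∀ k, ∃ a ∈ B (k+1), (∀ b ∈ F k, b < a) ∧ F (k+1) = insert a (F k) := fun k => by
    have := hn3 k (S k); rw [← hSs] at this; exact this
  have hB0 : B 0 = Lim P x t0 := by simp [B, hS0]
  have hF0 : F 0 = ∅ := by simp [F, hS0]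
  clear_value F B
  have hBanti : Antitone B := antitone_nat_of_succ_le hB1
  have hFmono : Monotone F := monotone_nat_of_le_succ fun k => by
    obtain ⟨a, -, -, h3⟩ := hF1 k
    rw [h3]; exact Finset.subset_insert _ _
  have hcard : ∀ k, (F k).card = k := by
    intro k
    induction k with
    | zero => simp [hF0]
    | succ k ih =>
      obtain ⟨a, -, h2, h3⟩ := hF1 k
      rw [h3, Finset.card_insert_of_notMem (fun hh => lt_irrefl _ (h2 a hh)), ih]
  have hFB : ∀ k j, (F j : Set ℕ) ⊆ F k ∪ B (k+1) := by
    intro k j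
    rcases le_total j k with hjk | hjk
    · exact fun i hi => Or.inl (hFmono hjk hi)
    · induction j, hjk using Nat.le_induction with
      | base => exact Set.subset_union_left
      | succ j hj ih =>
        obtain ⟨a, h1, -, h3⟩ := hF1 j
        rw [h3, Finset.coe_insert]
        refine Set.insert_subset (Or.inr (hBanti (by omega) h1)) ih
  have hFB0 : ∀ j, (F j : Set ℕ) ⊆ B 0 := by
    intro j
    induction j with
    | zero => simp [hF0]
    | succ j ih =>
      obtain ⟨a, h1, -, h3⟩ := hF1 j
      rw [h3, Finset.coe_insert]
      exact Set.insert_subset (hBanti (by omega) h1) ih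
  let A : Set ℕ := ⋃ k, (F k : Set ℕ)
  have hFA : ∀ k, (F k : Set ℕ) ⊆ A := fun k => Set.subset_iUnion (fun k => (F k : Set ℕ)) k
  have hAB : ∀ k, A ⊆ F k ∪ B (k+1) := fun k => Set.iUnion_subset (hFB k)
  have hA0 : A ⊆ Lim P x t0 := hB0 ▸ Set.iUnion_subset hFB0
  refine ⟨A, ?_, ?_⟩
  · intro hfin
    have h1 : F (hfin.toFinset.card + 1) ⊆ hfin.toFinset := fun i hi => by
      simpa using hFA _ hi
    have := Finset.card_le_card h1
    rw [hcard] at this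
    omega
  have claim : ∀ (s : {s : List ℕ // NodeExt s0 s ∧ A ⊆ Lim P x s}) (m : ℕ),
      ∃ t : {s : List ℕ // NodeExt s0 s ∧ A ⊆ Lim P x s},
      NodeExt s.1 t.1 ∧ s.1.length < t.1.length ∧
      ∀ f ∈ cyl t.1, m ≤ f s.1.length ∧ (∀ j ≤ m, f ∈ D j) ∧ ∀ a ∈ F m, f ∈ U a := by
    rintro ⟨s, hs, hAs⟩ m
    obtain ⟨j, hj⟩ := he s
    let k := max m j
    have hmk : m ≤ k := le_max_left _ _
    obtain ⟨h1, h2, h3, h4⟩ := hT s k (F k) hs ((hFA k).trans hAs)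
    refine ⟨⟨T s k (F k), hs.trans' h1, ?_⟩, h1, h2, ?_⟩
    · refine (hAB k).trans (Set.union_subset h3 ?_)
      have := hB2 k j (le_max_right _ _)
      rwa [hj] at this
    · intro f hf
      obtain ⟨h5, h6, h7⟩ := h4 f hf
      exact ⟨hmk.trans h5, fun j hj => h6 j (hj.trans hmk), fun a ha => h7 a (hFmono hmk ha)⟩
  choose nx hnx1 hnx2 hnx3 using claim
  intro g
  let s : ℕ → {s : List ℕ // NodeExt s0 s ∧ A ⊆ Lim P x s} := fun n =>
    Nat.rec ⟨t0, ht0, hA0⟩ (fun j s => nx s (max j (g s.1.length + 1))) n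
  have hss : ∀ j, s (j+1) = nx (s j) (max j (g (s j).1.length + 1)) := fun j => rfl
  clear_value s
  have q1 : ∀ j, NodeExt (s j).1 (s (j+1)).1 := fun j => by rw [hss]; exact hnx1 _ _
  have q2 : ∀ j, (s j).1.length < (s (j+1)).1.length := fun j => by rw [hss]; exact hnx2 _ _
  obtain ⟨f, hf⟩ := limit_fun (fun j => (s j).1) q1 q2 (fun j => ⟨_, hxc _ 0⟩)
  have q3 : ∀ j, max j (g (s j).1.length + 1) ≤ f (s j).1.length ∧ (∀ i ≤ j, f ∈ D i) ∧
      ∀ a ∈ F j, f ∈ U a := by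
    intro j
    have h0 := hf (j+1)
    simp only [hss] at h0
    obtain ⟨h1, h2, h3⟩ := hnx3 _ _ f h0
    exact ⟨h1, fun i hi => h2 i (hi.trans (le_max_left _ _)),
      fun a ha => h3 a (hFmono (le_max_left _ _) ha)⟩
  refine ⟨f, ?_, ?_⟩
  · refine Set.iUnion_subset fun k a ha => ?_
    exact (hP f (fun k => (q3 k).2.1 k le_rfl) a).2 ((q3 k).2.2 a ha)
  · rw [Filter.frequently_atTop]
    intro N
    have hlen : StrictMono fun j => (s j).1.length := strictMono_nat_of_lt_succ q2
    refine ⟨(s N).1.length, hlen.id_le N, ?_⟩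
    have := (q3 N).1
    have := le_max_right N (g (s N).1.length + 1)
    omega

/-- Generic continuity for countably many Borel sets. -/
lemma generic_open (Q : ℕ → Set (ℕ → ℕ)) (hQ : ∀ i, MeasurableSet (Q i)) :
    ∃ U : ℕ → Set (ℕ → ℕ), (∀ i, IsOpen (U i)) ∧
      {f | ∀ i, f ∈ Q i ↔ f ∈ U i} ∈ residual (ℕ → ℕ) := by
  have : ∀ i, ∃ u : Set (ℕ → ℕ), IsOpen u ∧ Q i =ᶠ[residual (ℕ → ℕ)] u :=
    fun i => (hQ i).residualEq_isOpen
  choose U hU hQU using this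
  refine ⟨U, hU, ?_⟩
  have := eventually_countable_forall.2 fun i => (hQU i).mem_iff
  exact this

lemma main_dichotomy (P : (ℕ → ℕ) → Set ℕ) (hPm : ∀ i, MeasurableSet {f | i ∈ P f}) :
    ∃ A : Set ℕ, A.Infinite ∧ ∀ g : ℕ → ℕ, ∃ f, (A ⊆ P f ∨ A ⊆ (P f)ᶜ) ∧
      ∃ᶠ n in atTop, g n < f n := by
  obtain ⟨U, hU, hUr⟩ := generic_open (fun i => {f | i ∈ P f}) hPm
  obtain ⟨V, hV, hVr⟩ := generic_open (fun i => {f | i ∈ P f}ᶜ) (fun i => (hPm i).compl)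
  obtain ⟨G, hGs, hG, hGd⟩ := mem_residual.1 (inter_mem hUr hVr)
  obtain ⟨D, hD, rfl⟩ := hG.eq_iInter_nat
  have hx : ∀ (s : List ℕ) (n : ℕ), ∃ y, (∀ k, y ∈ D k) ∧ y ∈ cyl s ∧ y s.length = n := by
    intro s n
    have hO : IsOpen (cyl s ∩ {f : ℕ → ℕ | f s.length = n}) :=
      (cyl_isOpen s).inter (coord_isOpen _ _)
    have hne : (cyl s ∩ {f : ℕ → ℕ | f s.length = n}).Nonempty := by
      refine ⟨fun i => if i < s.length then s.getD i 0 else n, ?_, ?_⟩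
      · intro i hi
        exact if_pos hi
      · simp
    obtain ⟨y, hy1, hy2⟩ := hGd.inter_open_nonempty _ hO hne
    exact ⟨y, Set.mem_iInter.1 hy2, hy1.1, hy1.2⟩
  choose x hxD hxc hxn using hx
  by_cases hcase : ∃ s0, ∀ s, NodeExt s0 s →
      ∃ t, NodeExt s t ∧ Lim P x t ∈ (hyperfilter ℕ : Filter ℕ)
  · obtain ⟨s0, h⟩ := hcase
    obtain ⟨A, hA, hg⟩ := core P D U hD hU
      (fun f hf i => (hGs (Set.mem_iInter.2 hf)).1 i) x hxD hxc hxn s0 h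
    refine ⟨A, hA, fun g => ?_⟩
    obtain ⟨f, h1, h2⟩ := hg g
    exact ⟨f, Or.inl h1, h2⟩
  · have h : ∀ s, NodeExt [] s → ∃ t, NodeExt s t ∧
        Lim (fun f => (P f)ᶜ) x t ∈ (hyperfilter ℕ : Filter ℕ) := by
      intro s _
      by_contra hcon
      apply hcase
      refine ⟨s, fun t ht => ⟨t, NodeExt.rfl' _, ?_⟩⟩
      by_contra hL
      apply hcon
      refine ⟨t, ht, ?_⟩
      have h1 : (Lim P x t)ᶜ ∈ hyperfilter ℕ := Ultrafilter.compl_mem_iff_notMem.2 hL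
      refine Filter.mem_of_superset h1 fun i hi => ?_
      exact Ultrafilter.eventually_not.2 hi
    obtain ⟨A, hA, hg⟩ := core (fun f => (P f)ᶜ) D V hD hV
      (fun f hf i => (hGs (Set.mem_iInter.2 hf)).2 i) x hxD hxc hxn [] h
    refine ⟨A, hA, fun g => ?_⟩
    obtain ⟨f, h1, h2⟩ := hg g
    exact ⟨f, Or.inr h1, h2⟩

theorem stmt10 :
    ¬ ∃ (φ : (ℕ → ℕ) → ICC) (ψ : ICC → (ℕ → ℕ)),
      Measurable φ ∧ Measurable ψ ∧
      ∀ (f : ℕ → ℕ) (A : ICC),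
        ¬ SplitsSet (bset (φ f).1) (bset A.1) →
        ∀ᶠ n in cofinite, f n ≤ ψ A n := by
  rintro ⟨φ, ψ, hφ, -, H⟩
  obtain ⟨A, hA, hg⟩ := main_dichotomy (fun f => bset (φ f).1) (fun i => by
    have h1 : Measurable fun f => (φ f).1 i := (measurable_pi_apply i).comp hφ.subtype_val
    exact h1 (measurableSet_singleton true))
  classical
  have hbs : bset (fun n => decide (n ∈ A)) = A := by ext n; simp [bset]
  have hco : (Aᶜ : Set ℕ).Infinite := by
    obtain ⟨f, h1, -⟩ := hg 0
    rcases h1 with h1 | h1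
    · exact (φ f).2.2.mono (Set.compl_subset_compl.2 h1)
    · exact (φ f).2.1.mono (Set.subset_compl_comm.1 h1)
  let a : ICC := ⟨fun n => decide (n ∈ A), by rw [hbs]; exact ⟨hA, hco⟩⟩
  have ha : bset a.1 = A := hbs
  obtain ⟨f, h1, h2⟩ := hg (ψ a)
  have h3 := H f a (by
    rw [ha]
    rintro ⟨h4, h5⟩
    rcases h1 with h1 | h1
    · rw [Set.diff_eq_empty.2 h1] at h5
      exact h5 Set.finite_empty
    · have : A ∩ bset (φ f).1 = ∅ :=
        Set.disjoint_iff_inter_eq_empty.1 (Set.subset_compl_iff_disjoint_right.1 h1)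
      rw [this] at h4
      exact h4 Set.finite_empty)
  rw [Nat.cofinite_eq_atTop] at h3
  obtain ⟨n, hn1, hn2⟩ := (h2.and_eventually h3).exists
  omega
end

section
/- For every n ≥ 1, there is no function ψ : 2^ℕ → 2^ℕ that is continuous on some comeager subset of 2^ℕ (in particular, no Baire measurable and no Borel such function) with the property that for every S ⊆ 2^ℕ, if S is an n-splitting family then the image ψ(S) is an (n+1)-splitting family. (Hence there is no Borel Tukey morphism from 𝔰_n to 𝔰_{n+1}.) -/
/-- `c ∈ 2^ℕ` splits the infinite set `A ⊆ ℕ`: both `{k ∈ A | c k = false}`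
and `{k ∈ A | c k = true}` are infinite. -/
def Splits (c : ℕ → Bool) (A : Set ℕ) : Prop :=
  {k ∈ A | c k = false}.Infinite ∧ {k ∈ A | c k = true}.Infinite

/-- `S ⊆ 2^ℕ` is an `n`-splitting family: for all infinite `A_1, …, A_n ⊆ ℕ`
some `c ∈ S` splits every `A_i`. -/
def NSplitting (n : ℕ) (S : Set (ℕ → Bool)) : Prop :=
  ∀ A : Fin n → Set ℕ, (∀ i, (A i).Infinite) → ∃ c ∈ S, ∀ i, Splits c (A i)

open Filter Topology

lemma cyl_nhds_s12 {c : ℕ → Bool} {V : Set (ℕ → Bool)} (hV : V ∈ 𝓝 c) :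
    ∃ M : ℕ, ∀ h : ℕ → Bool, (∀ x < M, h x = c x) → h ∈ V := by
  obtain ⟨t, ⟨x, m, rfl⟩, hc, hs⟩ :=
    (PiNat.isTopologicalBasis_cylinders (fun _ : ℕ => Bool)).mem_nhds_iff.1 hV
  refine ⟨m, fun h hh => hs ?_⟩
  intro i hi
  rw [hh i hi]
  exact hc i hi

lemma open_cyl (f : ℕ → Bool) (m : ℕ) : IsOpen {h : ℕ → Bool | ∀ x < m, h x = f x} :=
  PiNat.isOpen_cylinder (fun _ : ℕ => Bool) f m

lemma half_residual (A : Set ℕ) (hA : A.Infinite) (b : Bool) :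
    {c : ℕ → Bool | {k ∈ A | c k = b}.Infinite} ∈ residual (ℕ → Bool) := by
  have h1 : ∀ N : ℕ, {c : ℕ → Bool | ∃ k, N < k ∧ k ∈ A ∧ c k = b} ∈ residual (ℕ → Bool) := by
    intro N
    apply residual_of_dense_open
    · have : {c : ℕ → Bool | ∃ k, N < k ∧ k ∈ A ∧ c k = b}
          = ⋃ k ∈ {k | N < k ∧ k ∈ A}, (fun c : ℕ → Bool => c k) ⁻¹' {b} := by
        ext c; simp [and_assoc]
      rw [this]
      exact isOpen_biUnion fun k _ => (isOpen_discrete _).preimage (continuous_apply k)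
    · intro f
      rw [mem_closure_iff_nhds]
      intro V hV
      obtain ⟨M, hM⟩ := cyl_nhds_s12 hV
      obtain ⟨k, hk, hkM⟩ := hA.exists_gt (max M N)
      refine ⟨Function.update f k b, hM _ ?_, k, by omega, hk, by simp⟩
      intro x hx
      rw [Function.update_of_ne]
      omega
  filter_upwards [countable_iInter_mem.2 h1] with c hc
  refine Set.infinite_of_not_bddAbove ?_
  rintro ⟨N, hN⟩
  obtain ⟨k, hk, hkA, hkb⟩ := Set.mem_iInter.1 hc N
  exact absurd (hN ⟨hkA, hkb⟩) (by omega)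

lemma splits_residual {n : ℕ} (B : Fin n → Set ℕ) (hB : ∀ i, (B i).Infinite) :
    {c : ℕ → Bool | ∀ i, Splits c (B i)} ∈ residual (ℕ → Bool) := by
  have : ∀ᶠ c in residual (ℕ → Bool), ∀ i, Splits c (B i) := by
    rw [eventually_all]
    intro i
    exact (show ∀ᶠ c in residual (ℕ → Bool), _ from half_residual (B i) (hB i) false).and
      (half_residual (B i) (hB i) true)
  exact this

/-- the step of the construction -/
lemma step_lemma (ψ : (ℕ → Bool) → (ℕ → Bool)) (G : Set (ℕ → Bool)) (hψ : ContinuousOn ψ G)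
    (hfin : ∀ (f : ℕ → Bool) (m : ℕ),
      {k | ∀ c ∈ G, (∀ x < m, c x = f x) → ψ c k = true}.Finite)
    (U : Set (ℕ → Bool)) (hU : IsOpen U) (hGU : G ⊆ U) (p : ℕ × ℕ) :
    ∃ q : ℕ × ℕ, p.1 < q.1 ∧ p.2 < q.2 ∧ ∀ f : ℕ → Bool, ∃ g : ℕ → Bool,
      (∀ x < p.1, g x = f x) ∧
      ∀ h : ℕ → Bool, (∀ x < q.1, h x = g x) → h ∈ U ∧ (h ∈ G → ψ h q.2 = false) := by
  obtain ⟨m, k0⟩ := p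
  let ext : (Fin m → Bool) → (ℕ → Bool) := fun s x => if h : x < m then s ⟨x, h⟩ else false
  have hun : (⋃ s : Fin m → Bool,
      {k | ∀ c ∈ G, (∀ x < m, c x = ext s x) → ψ c k = true}).Finite :=
    Set.finite_iUnion fun s => hfin _ _
  obtain ⟨k, hk, hk0⟩ := hun.infinite_compl.exists_gt k0
  have h1 : ∀ s : Fin m → Bool, ∃ g : ℕ → Bool, ∃ M : ℕ, (∀ x < m, g x = ext s x) ∧
      ∀ h : ℕ → Bool, (∀ x < M, h x = g x) → h ∈ U ∧ (h ∈ G → ψ h k = false) := by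
    intro s
    have hs : ¬ ∀ c ∈ G, (∀ x < m, c x = ext s x) → ψ c k = true := fun h =>
      hk (Set.mem_iUnion.2 ⟨s, h⟩)
    push Not at hs
    obtain ⟨c, hcG, hcs, hck⟩ := hs
    have hck : ψ c k = false := by simpa using hck
    have hcont : ContinuousWithinAt (fun c => ψ c k) G c :=
      (continuous_apply k).continuousAt.comp_continuousWithinAt (hψ c hcG)
    have hev : ∀ᶠ h in 𝓝[G] c, ψ h k = false := by
      have : ({false} : Set Bool) ∈ 𝓝 (ψ c k) := by
        rw [hck]; exact (isOpen_discrete _).mem_nhds rfl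
      exact hcont this
    rw [eventually_nhdsWithin_iff] at hev
    obtain ⟨M, hM⟩ := cyl_nhds_s12 ((hU.eventually_mem (hGU hcG)).and hev)
    exact ⟨c, M, hcs, fun h hh => hM h hh⟩
  choose g M hg hM using h1
  obtain ⟨M', hM'⟩ := (Set.finite_range M).bddAbove
  refine ⟨(max M' (m + 1), k), by simp, hk0, fun f => ?_⟩
  refine ⟨g (fun x => f x), ?_, ?_⟩
  · intro x hx
    rw [hg _ x hx]
    simp only [ext]
    rw [dif_pos hx]
  · intro h hh
    refine hM _ h fun x hx => hh x ?_
    have := hM' ⟨(fun x : Fin m => f x), rfl⟩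
    exact lt_of_lt_of_le hx (le_trans this (le_max_left _ _))

lemma mono_Splits {c d : ℕ → Bool} {B D : Set ℕ} (h : Splits d (B \ D))
    (hcd : ∀ x, x ∉ D → c x = d x) : Splits c B := by
  refine ⟨h.1.mono ?_, h.2.mono ?_⟩ <;>
  · rintro x ⟨⟨hx, hxD⟩, hd⟩
    exact ⟨hx, by rw [hcd x hxD, hd]⟩

theorem stmt12 (n : ℕ) (hn : 1 ≤ n) :
    ¬ ∃ ψ : (ℕ → Bool) → (ℕ → Bool),
      (∃ G : Set (ℕ → Bool), G ∈ residual (ℕ → Bool) ∧ ContinuousOn ψ G) ∧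
      ∀ S : Set (ℕ → Bool), NSplitting n S → NSplitting (n + 1) (ψ '' S) := by
  rintro ⟨ψ, ⟨G0, hG0, hψ0⟩, hS⟩
  -- Tukey reformulation
  have tukey : ∀ A : Fin (n + 1) → Set ℕ, (∀ i, (A i).Infinite) →
      ∃ B : Fin n → Set ℕ, (∀ i, (B i).Infinite) ∧
        ∀ c, (∀ i, Splits c (B i)) → ∀ j, Splits (ψ c) (A j) := by
    intro A hA
    by_contra hcon
    push Not at hcon
    have h1 : NSplitting n {c | ∃ j, ¬ Splits (ψ c) (A j)} := by
      intro B hB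
      obtain ⟨c, hc, j, hj⟩ := hcon B hB
      exact ⟨c, ⟨j, hj⟩, hc⟩
    obtain ⟨_, ⟨c, ⟨j, hj⟩, rfl⟩, h2⟩ := hS _ h1 A hA
    exact hj (h2 j)
  obtain ⟨G, hGG0, hGδ, hGd⟩ := mem_residual.1 hG0
  have hψ := hψ0.mono hGG0
  have hGres : G ∈ residual (ℕ → Bool) := mem_residual.2 ⟨G, subset_rfl, hGδ, hGd⟩
  obtain ⟨W, hW, hGW⟩ := isGδ_iff_eq_iInter_nat.1 hGδ
  by_cases hfin : ∀ (f : ℕ → Bool) (m : ℕ),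
      {k | ∀ c ∈ G, (∀ x < m, c x = f x) → ψ c k = true}.Finite
  swap
  · push Not at hfin
    obtain ⟨f, m, hK⟩ := hfin
    obtain ⟨B, hB, hBc⟩ := tukey (fun _ => _) (fun _ => hK)
    have hd : Dense (G ∩ {c : ℕ → Bool | ∀ i, Splits c (B i)}) :=
      dense_of_mem_residual (inter_mem hGres (splits_residual B hB))
    obtain ⟨c, hcf, hcG, hcB⟩ := hd.inter_open_nonempty _ (open_cyl f m) ⟨f, fun _ _ => rfl⟩
    refine (hBc c hcB 0).1 ?_
    convert Set.finite_empty
    ext k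
    simp only [Set.mem_setOf_eq, Set.mem_empty_iff_false, iff_false, not_and]
    intro hk
    simp [hk c hcG hcf]
  -- main case
  let U : ℕ → Set (ℕ → Bool) := fun i => ⋂ l ∈ Finset.range (i + 1), W l
  have hU : ∀ i, IsOpen (U i) := fun i => isOpen_biInter_finset fun l _ => hW l
  have hGU : ∀ i, G ⊆ U i := fun i => by
    rw [hGW]; exact Set.subset_iInter₂ fun l _ => Set.iInter_subset _ l
  choose F hF1 hF2 g hg1 hg2 using fun i => step_lemma ψ G hψ hfin (U i) (hU i) (hGU i)
  let p : ℕ → ℕ × ℕ := fun i => Nat.rec (0, 0) (fun i q => F i q) i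
  have hp : ∀ i, p (i + 1) = F i (p i) := fun i => rfl
  have hm : StrictMono fun i => (p i).1 := strictMono_nat_of_lt_succ fun i => hF1 i (p i)
  have hk : StrictMono fun i => (p i).2 := strictMono_nat_of_lt_succ fun i => hF2 i (p i)
  let A : Fin (n + 1) → Set ℕ := fun j => {k | ∃ i, i % (n + 1) = j ∧ k = (p (i + 1)).2}
  let D : Fin (n + 1) → Set ℕ := fun j =>
    {x | ∃ i, i % (n + 1) = j ∧ (p i).1 ≤ x ∧ x < (p (i + 1)).1}
  have hA : ∀ j, (A j).Infinite := by
    intro j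
    refine Set.infinite_of_not_bddAbove ?_
    rintro ⟨N, hN⟩
    have h1 : (p ((j + (n + 1) * N) + 1)).2 ∈ A j :=
      ⟨j + (n + 1) * N, by rw [Nat.add_mul_mod_self_left, Nat.mod_eq_of_lt j.2], rfl⟩
    have h2 := hN h1
    have h3 := hk.le_apply (x := (j + (n + 1) * N) + 1)
    nlinarith
  have hD : ∀ j j' x, x ∈ D j → x ∈ D j' → j = j' := by
    rintro j j' x ⟨i, hi, h1, h2⟩ ⟨i', hi', h1', h2'⟩
    have e1 : i < i' + 1 := hm.lt_iff_lt.1 (lt_of_le_of_lt h1 h2')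
    have e2 : i' < i + 1 := hm.lt_iff_lt.1 (lt_of_le_of_lt h1' h2)
    have : i = i' := by omega
    subst this
    exact Fin.ext (hi.symm.trans hi')
  obtain ⟨B, hB, hBc⟩ := tukey A hA
  -- pigeonhole
  have hj : ∃ j, ∀ l, (B l \ D j).Infinite := by
    by_contra hcon
    push Not at hcon
    choose l hl using hcon
    obtain ⟨j, j', hne, he⟩ := Fintype.exists_ne_map_eq_of_card_lt l (by simp)
    have h1 := hl j
    have h2 := hl j'
    rw [← he] at h2
    refine hB (l j) ((h1.union h2).subset ?_)
    intro x hx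
    by_cases hxj : x ∈ D j
    · exact Or.inr ⟨hx, fun h => hne (hD _ _ _ hxj h)⟩
    · exact Or.inl ⟨hx, hxj⟩
  obtain ⟨j, hj⟩ := hj
  obtain ⟨d, hd⟩ := (dense_of_mem_residual (splits_residual _ hj)).nonempty
  let e : ℕ → (ℕ → Bool) := fun i => Nat.rec d (fun i f =>
    if i % (n + 1) = j then fun x => if x < (p (i + 1)).1 then g i (p i) f x else d x else f) i
  have he : ∀ i, e (i + 1) = if i % (n + 1) = j then
    fun x => if x < (p (i + 1)).1 then g i (p i) (e i) x else d x else e i := fun i => rfl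
  have he1 : ∀ i x, x < (p i).1 → e (i + 1) x = e i x := by
    intro i x hx
    rw [he]
    split_ifs with h
    · simp only
      rw [if_pos (hx.trans (hF1 i (p i))), hg1 i (p i) _ x hx]
    · rfl
  have he2 : ∀ i i' x, x < (p i).1 → i ≤ i' → e i' x = e i x := by
    intro i i' x hx hii
    induction i', hii using Nat.le_induction with
    | base => rfl
    | succ a ha ih =>
      rw [he1 a x (lt_of_lt_of_le hx (hm.monotone ha)), ih]
  let c : ℕ → Bool := fun x => e (x + 1) x
  have hc : ∀ i x, x < (p i).1 → c x = e i x := by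
    intro i x hx
    have hx' : x < (p (x + 1)).1 := hm.le_apply (x := x + 1)
    rcases le_total i (x + 1) with h | h
    · exact he2 _ _ _ hx h
    · exact (he2 _ _ _ hx' h).symm
  have hcd : ∀ x, x ∉ D j → c x = d x := by
    intro x hx
    have : ∀ i, e i x = d x := by
      intro i
      induction i with
      | zero => rfl
      | succ i ih =>
        rw [he]
        split_ifs with h
        · simp only
          split_ifs with h2
          · rw [hg1 i (p i) _ x, ih]
            by_contra h3
            exact hx ⟨i, h, not_lt.1 h3, h2⟩
          · rfl
        · exact ih
    exact this (x + 1)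
  have hforce : ∀ i, i % (n + 1) = j → c ∈ U i ∧ (c ∈ G → ψ c (p (i + 1)).2 = false) := by
    intro i hi
    refine hg2 i (p i) (e i) c fun x hx => ?_
    have hx : x < (p (i + 1)).1 := hx
    rw [hc (i + 1) x hx, he, if_pos hi]
    rw [if_pos hx]
  have hcG : c ∈ G := by
    rw [hGW]
    refine Set.mem_iInter.2 fun l => ?_
    have := (hforce (j + (n + 1) * l)
      (by rw [Nat.add_mul_mod_self_left, Nat.mod_eq_of_lt j.2])).1
    refine Set.mem_iInter₂.1 this l (Finset.mem_range.2 ?_)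
    nlinarith
  refine (hBc c (fun l => mono_Splits (hd l) hcd) j).2 ?_
  convert Set.finite_empty
  ext k
  simp only [Set.mem_setOf_eq, Set.mem_empty_iff_false, iff_false, not_and]
  rintro ⟨i, hi, rfl⟩
  simp [(hforce i hi).2 hcG]
end

section
/- Let 1 ≤ m' ≤ m, m ≤ n, m' ≤ n', and let r be the remainder upon dividing n by n'. If ⌊n/n'⌋·(m'−1) + min(r, m'−1) < m, then every (n,m)-splitting family S ⊆ 2^ℕ is also an (n',m')-splitting family. (Hence the identity maps form a Borel Tukey morphism from 𝔰_{n,m} to 𝔰_{n',m'} in this case.) -/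
/-- `S ⊆ 2^ℕ` is an `(n,m)`-splitting family: for all infinite
`A_1, …, A_n ⊆ ℕ` some `c ∈ S` splits at least `m` of the `A_i`. -/
def NMSplitting (n m : ℕ) (S : Set (ℕ → Bool)) : Prop :=
  ∀ A : Fin n → Set ℕ, (∀ i, (A i).Infinite) →
    ∃ c ∈ S, m ≤ {i : Fin n | Splits c (A i)}.ncard

/-- Let `1 ≤ m' ≤ m ≤ n` and `m' ≤ n'` and let `r = n % n'`.  If
`⌊n/n'⌋·(m'−1) + min(r, m'−1) < m`, then every `(n,m)`-splitting family is an
`(n',m')`-splitting family.  (The identity is a Borel Tukey morphism from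
𝔰_{n,m} to 𝔰_{n',m'}.) -/
theorem stmt16 (m n m' n' : ℕ) (hm' : 1 ≤ m') (hm'm : m' ≤ m) (hmn : m ≤ n)
    (hm'n' : m' ≤ n')
    (hcond : (n / n') * (m' - 1) + min (n % n') (m' - 1) < m) :
    ∀ S : Set (ℕ → Bool), NMSplitting n m S → NMSplitting n' m' S := by
  classical
  intro S hS A hA
  have hn' : 0 < n' := by omega
  obtain ⟨c, hc, hcm⟩ := hS (fun i => A ⟨i.1 % n', Nat.mod_lt _ hn'⟩) (fun i => hA _)
  refine ⟨c, hc, ?_⟩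
  by_contra hlt
  set T : Finset (Fin n') := Finset.univ.filter (fun j => Splits c (A j)) with hT
  have hTc : {i : Fin n' | Splits c (A i)}.ncard = T.card := by
    rw [← Set.ncard_coe_finset]; congr 1; ext; simp [hT]
  set U : Finset (Fin n) := Finset.univ.filter
    (fun i => Splits c (A ⟨i.1 % n', Nat.mod_lt _ hn'⟩)) with hU
  have hUc : {i : Fin n | Splits c (A ⟨i.1 % n', Nat.mod_lt _ hn'⟩)}.ncard = U.card := by
    rw [← Set.ncard_coe_finset]; congr 1; ext; simp [hU]
  rw [hTc] at hlt
  rw [hUc] at hcm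
  set V : Finset ℕ := T.image Fin.val with hV
  have hVc : V.card ≤ m' - 1 := le_trans Finset.card_image_le (by omega)
  set W : Finset (ℕ × ℕ) := (Finset.range (n / n') ×ˢ V) ∪
    ({n / n'} ×ˢ (Finset.range (n % n') ∩ V)) with hW
  have hUW : U.card ≤ W.card := by
    apply Finset.card_le_card_of_injOn (fun i => (i.1 / n', i.1 % n'))
    · intro i hi
      have hi' : Splits c (A ⟨i.1 % n', Nat.mod_lt _ hn'⟩) := by simpa [hU] using hi
      have hiV : i.1 % n' ∈ V :=
        Finset.mem_image.2 ⟨⟨i.1 % n', Nat.mod_lt _ hn'⟩, by simp [hT, hi'], rfl⟩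
      have hle : i.1 / n' ≤ n / n' := Nat.div_le_div_right i.2.le
      rcases hle.lt_or_eq with h | h
      · simp [hW, h, hiV]
      · have h1 := Nat.div_add_mod i.1 n'
        have h2 := Nat.div_add_mod n n'
        have h3 := i.2
        rw [h] at h1
        have h4 : i.1 % n' < n % n' := by omega
        simp [hW, h, hiV, h4]
    · intro i _ j _ hij
      simp only [Prod.mk.injEq] at hij
      apply Fin.ext
      rw [← Nat.div_add_mod i.1 n', ← Nat.div_add_mod j.1 n', hij.1, hij.2]
  have hWc : W.card ≤ (n / n') * (m' - 1) + min (n % n') (m' - 1) := by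
    refine (Finset.card_union_le _ _).trans (add_le_add ?_ ?_)
    · rw [Finset.card_product, Finset.card_range]
      exact Nat.mul_le_mul_left _ hVc
    · rw [Finset.card_product, Finset.card_singleton, one_mul]
      refine le_min ?_ ?_
      · simpa using Finset.card_le_card (Finset.inter_subset_left (s₁ := Finset.range (n % n')) (s₂ := V))
      · exact (Finset.card_le_card Finset.inter_subset_right).trans hVc
  omega
end

section
/- Let 1 ≤ m' ≤ m, m ≤ n, m' ≤ n', and let r be the remainder upon dividing n by n'. If ⌊n/n'⌋·(m'−1) + min(r, m'−1) ≥ m, then there is no Borel function ψ : 2^ℕ → 2^ℕ such that the image ψ(S) of every (n,m)-splitting family S ⊆ 2^ℕ is an (n',m')-splitting family. (Hence there is no Borel Tukey morphism from 𝔰_{n,m} to 𝔰_{n',m'} in this case.) -/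
open PiNat in
theorem exists_cylinder_subset {W : Set (ℕ → Bool)} (hW : IsOpen W) {x : ℕ → Bool} (hx : x ∈ W) :
    ∃ N, cylinder x N ⊆ W := by
  obtain ⟨v, ⟨y, N, rfl⟩, hxv, hvW⟩ :=
    (PiNat.isTopologicalBasis_cylinders (fun _ : ℕ => Bool)).exists_subset_of_mem_open hx hW
  refine ⟨N, ?_⟩
  rwa [mem_cylinder_iff_eq.1 hxv]

theorem residual_infinite {A : Set ℕ} (hA : A.Infinite) (b : Bool) :
    {c : ℕ → Bool | {k ∈ A | c k = b}.Infinite} ∈ residual (ℕ → Bool) := by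
  have h : ∀ N : ℕ, {c : ℕ → Bool | ∃ k ∈ A, N < k ∧ c k = b} ∈ residual (ℕ → Bool) := by
    intro N
    apply residual_of_dense_open
    · have : {c : ℕ → Bool | ∃ k ∈ A, N < k ∧ c k = b}
          = ⋃ k ∈ {k | k ∈ A ∧ N < k}, (fun c : ℕ → Bool => c k) ⁻¹' {b} := by
        ext c; simp [and_assoc]
      rw [this]
      exact isOpen_biUnion fun k _ => (isOpen_discrete _).preimage (continuous_apply k)
    · rw [dense_iff_inter_open]
      intro W hW ⟨x, hx⟩
      obtain ⟨M, hM⟩ := exists_cylinder_subset hW hx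
      obtain ⟨k, hk, hlt⟩ := hA.exists_gt (max M N)
      refine ⟨Function.update x k b, hM ?_, k, hk, lt_of_le_of_lt (le_max_right _ _) hlt, by simp⟩
      intro i hi
      have : i ≠ k := by have := le_max_left M N; omega
      simp [this]
  filter_upwards [countable_iInter_mem.2 h] with c hc
  refine Set.infinite_of_forall_exists_gt fun N => ?_
  obtain ⟨k, hk, hlt, hb⟩ := Set.mem_iInter.1 hc N
  exact ⟨k, ⟨hk, hb⟩, hlt⟩

theorem residual_splits {ι : Type} [Finite ι] {A : ι → Set ℕ} (hA : ∀ i, (A i).Infinite) :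
    {c : ℕ → Bool | ∀ i, Splits c (A i)} ∈ residual (ℕ → Bool) := by
  have h : ∀ i, {c : ℕ → Bool | Splits c (A i)} ∈ residual (ℕ → Bool) := fun i => by
    filter_upwards [residual_infinite (hA i) false, residual_infinite (hA i) true] with c h1 h2
    exact ⟨h1, h2⟩
  filter_upwards [countable_iInter_mem.2 h] with c hc i
  exact Set.mem_iInter.1 hc i

open PiNat in
theorem block_step {U : ℕ → Set (ℕ → Bool)} (hU : ∀ k, IsOpen (U k))
    (hcase : ∀ (N : ℕ) (c : ℕ → Bool), {k | ¬ (U k ∩ cylinder c N).Nonempty}.Finite)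
    {V : Set (ℕ → Bool)} (hV : IsOpen V) (hVd : Dense V) (N lb : ℕ) :
    ∃ k M : ℕ, lb < k ∧ N < M ∧ ∀ c : ℕ → Bool, ∃ d ∈ cylinder c N, cylinder d M ⊆ U k ∩ V := by
  let ext : (Fin N → Bool) → (ℕ → Bool) := fun σ i => if h : i < N then σ ⟨i, h⟩ else false
  have hfin : ((⋃ σ, {k | ¬ (U k ∩ cylinder (ext σ) N).Nonempty}) ∪ Set.Iic lb).Finite :=
    (Set.finite_iUnion fun σ => hcase N (ext σ)).union (Set.finite_Iic lb)
  obtain ⟨k, hk⟩ := hfin.exists_notMem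
  simp only [Set.mem_union, Set.mem_iUnion, Set.mem_ofPred_eq, Set.mem_Iic, not_or, not_exists,
    not_not, not_le] at hk
  have h1 : ∀ σ, ∃ d M, d ∈ cylinder (ext σ) N ∧ cylinder d M ⊆ U k ∩ V := by
    intro σ
    obtain ⟨d, ⟨hd1, hd2⟩, hd3⟩ :=
      hVd.inter_open_nonempty _ ((hU k).inter (isOpen_cylinder _ (ext σ) N)) (hk.1 σ)
    obtain ⟨M, hM⟩ := exists_cylinder_subset ((hU k).inter hV) (x := d) ⟨hd1, hd3⟩
    exact ⟨d, M, hd2, hM⟩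
  choose d M hd hM using h1
  refine ⟨k, max (N + 1) (Finset.univ.sup M), hk.2, by omega, fun c => ?_⟩
  refine ⟨d (fun i => c i), ?_, ?_⟩
  · intro i hi
    rw [hd (fun i => c i) i hi]
    simp [ext, hi]
  · refine (cylinder_anti _ ?_).trans (hM _)
    exact (Finset.le_sup (f := M) (Finset.mem_univ _)).trans (le_max_right _ _)

open PiNat in
theorem exists_blocks {U : ℕ → Set (ℕ → Bool)} (hU : ∀ k, IsOpen (U k))
    (hcase : ∀ (N : ℕ) (c : ℕ → Bool), {k | ¬ (U k ∩ cylinder c N).Nonempty}.Finite)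
    {V : ℕ → Set (ℕ → Bool)} (hV : ∀ i, IsOpen (V i)) (hVd : ∀ i, Dense (V i)) :
    ∃ (j b : ℕ → ℕ) (e : ℕ → (ℕ → Bool) → (ℕ → Bool)), j 0 = 0 ∧ StrictMono j ∧ StrictMono b ∧
      ∀ i c, e i c ∈ cylinder c (j i) ∧ cylinder (e i c) (j (i + 1)) ⊆ U (b i) ∩ V i := by
  have h := fun i N lb => block_step hU hcase (hV i) (hVd i) N lb
  choose K M hK hM d hd hdM using h
  let st : ℕ → ℕ × ℕ := fun i => Nat.rec (0, 0) (fun i s => (M i s.1 s.2, K i s.1 s.2)) i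
  refine ⟨fun i => (st i).1, fun i => (st (i + 1)).2, fun i c => d i (st i).1 (st i).2 c, rfl,
    strictMono_nat_of_lt_succ fun i => hM i _ _, strictMono_nat_of_lt_succ fun i => hK (i + 1) _ _,
    fun i c => ⟨hd i _ _ c, hdM i _ _ c⟩⟩

open PiNat Classical in
theorem exists_fusion {j : ℕ → ℕ} (hj : StrictMono j) {e : ℕ → (ℕ → Bool) → (ℕ → Bool)}
    (he : ∀ i c, e i c ∈ cylinder c (j i)) (P : ℕ → Prop) (x : ℕ → Bool) :
    ∃ c : ℕ → Bool, ∀ i, (P i → ∃ c', c ∈ cylinder (e i c') (j (i + 1))) ∧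
      (¬ P i → ∀ a, j i ≤ a → a < j (i + 1) → c a = x i) := by
  let s : ℕ → (ℕ → Bool) := fun i => Nat.rec (fun _ => false)
    (fun i c => if P i then e i c else fun a => if a < j i then c a else x i) i
  have hs : ∀ i, s (i + 1) = if P i then e i (s i) else fun a => if a < j i then s i a else x i :=
    fun i => rfl
  have h1 : ∀ i a, a < j i → s (i + 1) a = s i a := by
    intro i a ha
    rw [hs]
    split_ifs with hP
    · exact he i (s i) a ha
    · simp [ha]
  have h2 : ∀ i i', i ≤ i' → ∀ a, a < j i → s i' a = s i a := by
    intro i i' hii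
    induction i', hii using Nat.le_induction with
    | base => intros; rfl
    | succ k hk ih =>
      intro a ha
      rw [h1 k a (ha.trans_le (hj.monotone hk)), ih a ha]
  let c : ℕ → Bool := fun a => s (a + 1) a
  have h3 : ∀ i a, a < j i → c a = s i a := by
    intro i a ha
    rcases le_total (a + 1) i with h | h
    · exact (h2 _ _ h a (lt_of_lt_of_le (Nat.lt_succ_self a) hj.le_apply)).symm
    · exact h2 _ _ h a ha
  refine ⟨c, fun i => ⟨fun hP => ⟨s i, fun a ha => ?_⟩, fun hP a h h' => ?_⟩⟩
  · rw [h3 _ a ha, hs, if_pos hP]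
  · rw [h3 _ a h', hs, if_neg hP]
    simp [h]

theorem exists_heavy {n n' : ℕ} (f : Fin n → Fin n') (t : ℕ) (ht : t ≤ n') :
    ∃ I : Finset (Fin n'), I.card = t ∧
      (n / n') * t + min (n % n') t ≤ (Finset.univ.filter fun i => f i ∈ I).card := by
  classical
  let a : Fin n' → ℕ := fun i => (Finset.univ.filter fun k => f k = i).card
  have hsum : ∀ I : Finset (Fin n'),
      (Finset.univ.filter fun i => f i ∈ I).card = ∑ i ∈ I, a i := by
    intro I
    rw [Finset.card_eq_sum_card_fiberwise (f := f) (t := I) (by intro i hi; simpa using hi)]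
    refine Finset.sum_congr rfl fun i hi => ?_
    congr 1
    ext k
    simp only [Finset.mem_filter, Finset.mem_univ, true_and]
    constructor
    · exact fun h => h.2
    · rintro rfl; exact ⟨hi, rfl⟩
  have hne : (Finset.powersetCard t (Finset.univ : Finset (Fin n'))).Nonempty := by
    rw [Finset.powersetCard_nonempty]; simpa using ht
  obtain ⟨I, hI, hmax⟩ := Finset.exists_max_image _ (fun I => ∑ i ∈ I, a i) hne
  rw [Finset.mem_powersetCard_univ] at hI
  refine ⟨I, hI, ?_⟩
  rw [hsum]
  by_cases hall : ∀ i ∈ I, n / n' + 1 ≤ a i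
  · have h := Finset.card_nsmul_le_sum I a _ hall
    rw [hI, smul_eq_mul] at h
    have := min_le_right (n % n') t
    nlinarith
  · push Not at hall
    obtain ⟨i, hi, hai⟩ := hall
    have hout : ∀ k ∈ Iᶜ, a k ≤ n / n' := by
      intro k hk
      rw [Finset.mem_compl] at hk
      have hk' : k ∉ I.erase i := fun h => hk (Finset.mem_of_mem_erase h)
      have h := hmax (insert k (I.erase i)) (by
        rw [Finset.mem_powersetCard_univ, Finset.card_insert_of_notMem hk',
          Finset.card_erase_add_one hi, hI])
      rw [Finset.sum_insert hk', ← Finset.add_sum_erase I a hi] at h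
      omega
    have h1 := Finset.sum_le_card_nsmul _ a _ hout
    have h2 := Finset.sum_add_sum_compl I a
    have h3 : ∑ i, a i = n := by
      rw [← hsum]; simp
    rw [Finset.card_compl, hI, Fintype.card_fin, smul_eq_mul] at h1
    have h4 := Nat.div_add_mod n n'
    have h5 := min_le_left (n % n') t
    obtain ⟨u, rfl⟩ := Nat.exists_eq_add_of_le ht
    rw [Nat.add_sub_cancel_left] at h1
    nlinarith

/-- Let `1 ≤ m' ≤ m ≤ n` and `m' ≤ n'` and let `r = n % n'`.  If
`⌊n/n'⌋·(m'−1) + min(r, m'−1) ≥ m`, then there is no Borel `ψ : 2^ℕ → 2^ℕ`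
carrying every `(n,m)`-splitting family to an `(n',m')`-splitting family.
(No Borel Tukey morphism from 𝔰_{n,m} to 𝔰_{n',m'} in this case.) -/
theorem stmt17 (m n m' n' : ℕ) (hm' : 1 ≤ m') (hm'm : m' ≤ m) (hmn : m ≤ n)
    (hm'n' : m' ≤ n')
    (hcond : m ≤ (n / n') * (m' - 1) + min (n % n') (m' - 1)) :
    ¬ ∃ ψ : (ℕ → Bool) → (ℕ → Bool),
      Measurable ψ ∧
      ∀ S : Set (ℕ → Bool), NMSplitting n m S → NMSplitting n' m' (ψ '' S) := by
  rintro ⟨ψ, hψ, hS⟩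
  have hn' : 0 < n' := by omega
  -- Baire property of the coordinate sets
  have hE : ∀ k, ∃ u : Set (ℕ → Bool), IsOpen u ∧
      {c : ℕ → Bool | ψ c k = false} =ᶠ[residual _] u := fun k =>
    MeasurableSet.residualEq_isOpen (((measurable_pi_apply k).comp hψ) (MeasurableSet.singleton false))
  choose U hU hEU using hE
  have hG : {c : ℕ → Bool | ∀ k, ψ c k = false ↔ c ∈ U k} ∈ residual (ℕ → Bool) := by
    have : ∀ k, {c : ℕ → Bool | ψ c k = false ↔ c ∈ U k} ∈ residual (ℕ → Bool) := fun k =>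
      Filter.eventuallyEq_set.1 (hEU k)
    filter_upwards [countable_iInter_mem.2 this] with c hc k
    exact Set.mem_iInter.1 hc k
  by_cases hcase : ∀ (N : ℕ) (c : ℕ → Bool), {k | ¬ (U k ∩ PiNat.cylinder c N).Nonempty}.Finite
  · obtain ⟨t, htG, htδ, htd⟩ := mem_residual.1 hG
    obtain ⟨D, hD, rfl⟩ := isGδ_iff_eq_iInter_nat.1 htδ
    obtain ⟨j, b, e, hj0, hj, hb, he⟩ := exists_blocks hU hcase (V := fun i => ⋂ l ∈ Set.Iic i, D l)
      (fun i => (Set.finite_Iic i).isOpen_biInter fun l _ => hD l)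
      (fun i => htd.mono fun c hc => Set.mem_iInter₂.2 fun l _ => Set.mem_iInter.1 hc l)
    let ρ : ℕ → Fin n' := fun k => ⟨k % n', Nat.mod_lt k hn'⟩
    have hρ : ∀ i : Fin n', {k | ρ k = i}.Infinite := by
      intro i
      refine Set.infinite_of_forall_exists_gt fun N => ⟨i + n' * (N + 1), ?_, ?_⟩
      · simp [ρ, Nat.add_mul_mod_self_left, Nat.mod_eq_of_lt i.2]
      · nlinarith
    let B : Fin n' → Set ℕ := fun i => b '' {k | ρ k = i}
    have hB : ∀ i, (B i).Infinite := fun i => (hρ i).image hb.injective.injOn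
    let S : Set (ℕ → Bool) := {c | {i | Splits (ψ c) (B i)}.ncard ≤ m' - 1}
    suffices hSS : NMSplitting n m S by
      obtain ⟨_, ⟨c, hc, rfl⟩, h⟩ := hS S hSS B hB
      have : _ ≤ m' - 1 := hc
      omega
    intro A hA
    let T : Fin n → Set ℕ := fun l => {k | ∃ a ∈ A l, j k ≤ a ∧ a < j (k + 1)}
    have hT : ∀ l, (T l).Infinite := by
      intro l
      refine Set.infinite_of_forall_exists_gt fun N => ?_
      obtain ⟨a, ha, hlt⟩ := (hA l).exists_gt (j (N + 1))
      have hex : ∃ k, a < j (k + 1) := ⟨a, lt_of_lt_of_le (Nat.lt_succ_self a) hj.le_apply⟩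
      classical
      have hk := Nat.find_spec hex
      have hmin := fun q => Nat.find_min hex (m := q)
      generalize Nat.find hex = k at hk hmin
      have hk1 : N < k := by
        by_contra hcon
        have := hj.monotone (show k + 1 ≤ N + 1 by omega)
        omega
      refine ⟨k, ⟨a, ha, ?_, hk⟩, hk1⟩
      have := hmin (k - 1) (by omega)
      rw [Nat.sub_add_cancel (by omega)] at this
      omega
    have hf : ∀ l, ∃ i, (T l ∩ {k | ρ k = i}).Infinite := by
      intro l
      by_contra hcon
      push Not at hcon
      refine hT l ((Set.finite_iUnion hcon).subset fun k hk => ?_)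
      exact Set.mem_iUnion.2 ⟨ρ k, hk, rfl⟩
    choose f hf using hf
    obtain ⟨I, hI, hIm⟩ := exists_heavy f (m' - 1) (by omega)
    obtain ⟨x, hx⟩ := (dense_of_mem_residual (residual_splits hf)).nonempty
    obtain ⟨c, hc⟩ := exists_fusion hj (fun i c => (he i c).1) (fun k => ρ k ∉ I) x
    have hcP : ∀ k, ρ k ∉ I → c ∈ U (b k) ∩ ⋂ l ∈ Set.Iic k, D l := by
      intro k hk
      obtain ⟨c', hc'⟩ := (hc k).1 hk
      exact (he k c').2 hc'
    obtain ⟨i₀, hi₀⟩ : ∃ i₀, i₀ ∉ I := by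
      by_contra hcon
      push Not at hcon
      have : I = Finset.univ := Finset.eq_univ_iff_forall.2 hcon
      rw [this, Finset.card_univ, Fintype.card_fin] at hI
      omega
    have hcG : ∀ k, ψ c k = false ↔ c ∈ U k := by
      refine htG (Set.mem_iInter.2 fun l => ?_)
      obtain ⟨k, hk, hlt⟩ := (hρ i₀).exists_gt l
      have hk : ρ k = i₀ := hk
      exact Set.mem_iInter₂.1 (hcP k (by rwa [hk])).2 l hlt.le
    refine ⟨c, ?_, ?_⟩
    · have : {i | Splits (ψ c) (B i)} ⊆ (I : Set (Fin n')) := by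
        intro i hi
        by_contra hiI
        refine hi.2 (Set.finite_empty.subset ?_)
        rintro _ ⟨⟨k, hk, rfl⟩, hk2⟩
        have hk : ρ k = i := hk
        have := (hcG (b k)).2 (hcP k (by rw [hk]; exact hiI)).1
        simp [this] at hk2
      have h := Set.ncard_le_ncard this
      rw [Set.ncard_coe_finset, hI] at h
      exact h
    · refine (hcond.trans hIm).trans ?_
      rw [← Set.ncard_coe_finset]
      refine Set.ncard_le_ncard fun l hl => ?_
      have hl : f l ∈ I := by simpa using hl
      have key : ∀ v : Bool, {k ∈ T l ∩ {k | ρ k = f l} | x k = v}.Infinite →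
          {a ∈ A l | c a = v}.Infinite := by
        intro v hv
        refine Set.infinite_of_forall_exists_gt fun N => ?_
        obtain ⟨k, ⟨⟨⟨a, ha, h1, h2⟩, hk⟩, hxk⟩, hlt⟩ := hv.exists_gt N
        have hk : ρ k = f l := hk
        refine ⟨a, ⟨ha, ?_⟩, hlt.trans_le (hj.le_apply.trans h1)⟩
        rw [(hc k).2 (by simpa [hk] using hl) a h1 h2, hxk]
      exact ⟨key _ (hx l).1, key _ (hx l).2⟩
  · push Not at hcase
    obtain ⟨N, c₀, hinf⟩ := hcase
    let S : Set (ℕ → Bool) := {c | c ∈ PiNat.cylinder c₀ N ∧ ∀ k, ψ c k = false ↔ c ∈ U k}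
    have hSS : NMSplitting n m S := by
      intro A hA
      obtain ⟨c, hc1, hc2, hc3⟩ := (dense_of_mem_residual
        (Filter.inter_mem hG (residual_splits hA))).inter_open_nonempty _
        (PiNat.isOpen_cylinder _ c₀ N) ⟨c₀, PiNat.self_mem_cylinder c₀ N⟩
      refine ⟨c, ⟨hc1, hc2⟩, ?_⟩
      have : {i | Splits c (A i)} = Set.univ := Set.eq_univ_of_forall hc3
      rw [this, Set.ncard_univ, Nat.card_eq_fintype_card, Fintype.card_fin]
      exact hmn
    obtain ⟨_, ⟨c, ⟨hc1, hc2⟩, rfl⟩, h⟩ := hS S hSS (fun _ => _) (fun _ => hinf)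
    have hempty : {i : Fin n' | Splits (ψ c) {k | ¬ (U k ∩ PiNat.cylinder c₀ N).Nonempty}} = ∅ := by
      refine Set.eq_empty_of_forall_notMem fun i hi => ?_
      refine hi.1 (Set.finite_empty.subset ?_)
      rintro k ⟨hk, hk2⟩
      exact hk ⟨c, (hc2 k).1 hk2, hc1⟩
    simp only [Set.not_nonempty_iff_eq_empty] at h hempty
    rw [hempty, Set.ncard_empty] at h
    omega
end

section
/- For all natural numbers m, m' ≥ 3 with m ≠ m', there do not exist Borel maps φ : ([ω]^ω)^{2^{m'}} → ([ω]^ω)^{2^m} and ψ : 2^ℕ → 2^ℕ such that for every tuple (B_1, …, B_{2^{m'}}) of infinite subsets of ℕ and every c ∈ 2^ℕ: if c splits at least m of the 2^m components of φ(B_1, …, B_{2^{m'}}), then ψ(c) splits at least m' of B_1, …, B_{2^{m'}}. (I.e., the triples defining the cardinals 𝔰_{2^m, m} for m ≥ 3 form an antichain in the Borel Tukey ordering.) -/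
open Set Filter Topology

lemma open_cyl_s18 {V : Set (ℕ → Bool)} (hV : IsOpen V) {c : ℕ → Bool} (hc : c ∈ V) :
    ∃ n, ∀ y : ℕ → Bool, (∀ i < n, y i = c i) → y ∈ V := by
  obtain ⟨v, ⟨y, n, rfl⟩, h1, h2⟩ :=
    (PiNat.isTopologicalBasis_cylinders (fun _ : ℕ => Bool)).exists_subset_of_mem_open hc hV
  rw [← PiNat.mem_cylinder_iff_eq.1 h1] at h2
  exact ⟨n, fun z hz => h2 hz⟩

lemma cyl_open (c : ℕ → Bool) (n : ℕ) : IsOpen {y : ℕ → Bool | ∀ i < n, y i = c i} :=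
  PiNat.isOpen_cylinder (fun _ : ℕ => Bool) c n

lemma inf_residual (A : Set ℕ) (hA : A.Infinite) (ε : Bool) :
    {c : ℕ → Bool | {k ∈ A | c k = ε}.Infinite} ∈ residual (ℕ → Bool) := by
  have h : ∀ N : ℕ, {c : ℕ → Bool | ∃ k ∈ A, N < k ∧ c k = ε} ∈ residual (ℕ → Bool) := by
    intro N
    apply residual_of_dense_open
    · have : {c : ℕ → Bool | ∃ k ∈ A, N < k ∧ c k = ε} =
          ⋃ k ∈ {k ∈ A | N < k}, (fun c : ℕ → Bool => c k) ⁻¹' {ε} := by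
        ext c; simp [and_assoc]
      rw [this]
      exact isOpen_biUnion fun k _ => (isOpen_discrete _).preimage (continuous_apply k)
    · rw [dense_iff_inter_open]
      rintro V hV ⟨c, hc⟩
      obtain ⟨n, hn⟩ := open_cyl_s18 hV hc
      obtain ⟨k, hk, hk2⟩ := hA.exists_gt (max n N)
      refine ⟨Function.update c k ε, hn _ fun i hi => ?_, k, hk, ?_, by simp⟩
      · rw [Function.update_of_ne]
        have := le_max_left n N
        omega
      · have := le_max_right n N
        omega
  filter_upwards [countable_iInter_mem.2 h] with c hc
  rw [mem_iInter] at hc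
  refine Set.infinite_of_not_bddAbove ?_
  rintro ⟨M, hM⟩
  obtain ⟨k, hk, hk2, hk3⟩ := hc M
  have : k ≤ M := hM ⟨hk, hk3⟩
  omega

lemma splits_residual_s18 (A : Set ℕ) (hA : A.Infinite) :
    {c : ℕ → Bool | Splits c A} ∈ residual (ℕ → Bool) := by
  filter_upwards [inf_residual A hA false, inf_residual A hA true] with c h1 h2
  exact ⟨h1, h2⟩

/-- the one-step extension lemma -/
lemma step_s18 (O : ℕ → Set (ℕ → Bool)) (hO : ∀ x, IsOpen (O x))
    (hinf : ∀ V : Set (ℕ → Bool), IsOpen V → V.Nonempty → {x | V ∩ O x = ∅}.Finite)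
    (W : Set (ℕ → Bool)) (hW : IsOpen W) (hWd : Dense W) (l x0 : ℕ) :
    ∃ b > x0, ∃ l' > l, ∀ s : ℕ → Bool, ∃ t : ℕ → Bool, (∀ i < l, t i = s i) ∧
      ∀ y : ℕ → Bool, (∀ i < l', y i = t i) → y ∈ O b ∧ y ∈ W := by
  let ext : (Fin l → Bool) → (ℕ → Bool) := fun s n => if h : n < l then s ⟨n, h⟩ else false
  have hfin : (⋃ s : Fin l → Bool,
      {x | {y : ℕ → Bool | ∀ i < l, y i = ext s i} ∩ O x = ∅}).Finite :=
    Set.finite_iUnion fun s => hinf _ (cyl_open _ _) ⟨ext s, fun _ _ => rfl⟩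
  obtain ⟨b, hb, hb2⟩ := hfin.infinite_compl.exists_gt x0
  have key : ∀ s : Fin l → Bool, ∃ t : ℕ → Bool, (∀ i < l, t i = ext s i) ∧ ∃ n,
      ∀ y : ℕ → Bool, (∀ i < n, y i = t i) → y ∈ O b ∧ y ∈ W := by
    intro s
    have h1 : ({y : ℕ → Bool | ∀ i < l, y i = ext s i} ∩ O b).Nonempty := by
      rw [Set.nonempty_iff_ne_empty]
      intro h
      exact hb (mem_iUnion.2 ⟨s, h⟩)
    obtain ⟨t, ⟨ht1, ht2⟩, ht3⟩ :=
      hWd.inter_open_nonempty _ ((cyl_open _ _).inter (hO b)) h1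
    obtain ⟨n, hn⟩ := open_cyl_s18 ((hO b).inter hW) ⟨ht2, ht3⟩
    exact ⟨t, ht1, n, hn⟩
  choose t ht n hn using key
  refine ⟨b, hb2, l + 1 + Finset.univ.sup n, by omega, fun s => ⟨t fun i => s i, ?_, ?_⟩⟩
  · intro i hi
    rw [ht _ i hi]
    simp [ext, hi]
  · intro y hy
    refine hn _ y fun i hi => hy i ?_
    have := Finset.le_sup (f := n) (Finset.mem_univ (fun i : Fin l => s i))
    omega

lemma comb (m m' : ℕ) (hm : 3 ≤ m) (hm' : 3 ≤ m') (hne : m ≠ m')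
    (f : Fin (2 ^ m) → Fin (2 ^ m')) :
    ∃ I : Finset (Fin (2 ^ m')), I.card < m' ∧
      m ≤ (Finset.univ.filter fun j => f j ∈ I).card := by
  rcases lt_or_gt_of_ne hne with h | h
  · obtain ⟨J, hJ⟩ := Finset.exists_subset_card_eq
      (s := (Finset.univ : Finset (Fin (2 ^ m)))) (n := m) (by simpa using Nat.lt_two_pow_self.le)
    refine ⟨J.image f, (Finset.card_image_le).trans_lt (by omega), ?_⟩
    refine hJ.2.symm.le.trans (Finset.card_le_card ?_)
    intro j hj
    simpa using ⟨j, hj, rfl⟩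
  · obtain ⟨I, hI⟩ := Finset.exists_subset_card_eq
      (s := (Finset.univ : Finset (Fin (2 ^ m')))) (n := m' - 1)
      (by simpa using (Nat.sub_le _ _).trans Nat.lt_two_pow_self.le)
    have hI := hI.2
    by_contra hcon
    push Not at hcon
    have hinj : ∀ t : Fin (2 ^ m'), Function.Injective (fun x : Fin (2 ^ m') => x + t) :=
      fun t x y hxy => add_right_cancel hxy
    have h1 : ∀ t : Fin (2 ^ m'),
        (Finset.univ.filter fun j => f j - t ∈ I).card ≤ m - 1 := by
      intro t
      have h2 := hcon (I.image fun x => x + t)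
        (by rw [Finset.card_image_of_injective _ (hinj t)]; omega)
      have h3 : (Finset.univ.filter fun j => f j - t ∈ I) =
          (Finset.univ.filter fun j => f j ∈ I.image fun x => x + t) := by
        ext j
        simp only [Finset.mem_filter, Finset.mem_univ, true_and, Finset.mem_image]
        constructor
        · intro hj
          exact ⟨_, hj, sub_add_cancel _ _⟩
        · rintro ⟨x, hx, hxe⟩
          rw [← hxe, add_sub_cancel_right]
          exact hx
      rw [h3]
      omega
    have h2 : ∑ t : Fin (2 ^ m'), (Finset.univ.filter fun j => f j - t ∈ I).card
        = 2 ^ m * (m' - 1) := by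
      simp_rw [Finset.card_filter]
      rw [Finset.sum_comm]
      have : ∀ j : Fin (2 ^ m), ∑ t : Fin (2 ^ m'), (if f j - t ∈ I then 1 else 0) = m' - 1 := by
        intro j
        rw [← Finset.card_filter, ← hI]
        refine Finset.card_bij (fun t _ => f j - t) ?_ ?_ ?_
        · intro t ht
          simpa using ht
        · intro t _ t' _ htt
          exact sub_right_injective htt
        · intro x hx
          exact ⟨f j - x, by simpa using hx, by simp⟩
      simp [this]
    have h3 : ∑ t : Fin (2 ^ m'), (Finset.univ.filter fun j => f j - t ∈ I).card
        ≤ 2 ^ m' * (m - 1) := by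
      refine (Finset.sum_le_sum fun t _ => h1 t).trans ?_
      simp
    rw [h2] at h3
    obtain ⟨d, rfl⟩ : ∃ d, m = m' + d + 1 := ⟨m - m' - 1, by omega⟩
    have h4 : ∀ d : ℕ, m' + d < 2 ^ (d + 1) * (m' - 1) := by
      intro d
      induction d with
      | zero => simp; omega
      | succ d ih =>
        rw [pow_succ]
        have : 1 ≤ 2 ^ (d + 1) * (m' - 1) := by omega
        nlinarith
    have h5 := h4 d
    have h6 : 2 ^ (m' + d + 1) = 2 ^ m' * 2 ^ (d + 1) := by rw [← pow_add]; ring_nf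
    rw [h6, mul_assoc] at h3
    have h7 := Nat.le_of_mul_le_mul_left h3 (by positivity)
    omega

/-- Building `c` from free blocks (filled by `e`) and steered blocks. -/
lemma build (l : ℕ → ℕ) (hl : StrictMono l) (st : ℕ → (ℕ → Bool) → (ℕ → Bool))
    (hst : ∀ k s, ∀ i < l k, st k s i = s i) (F : ℕ → Prop) (e : ℕ → Bool) :
    ∃ c : ℕ → Bool, (∀ k, F k → ∀ n, l k ≤ n → n < l (k + 1) → c n = e n) ∧
      ∀ k, ¬ F k → ∃ s, ∀ i < l (k + 1), c i = st k s i := by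
  classical
  let g : ℕ → ℕ → Bool := fun k => Nat.rec e
    (fun k s => if F k then s else fun n => if n < l (k + 1) then st k s n else e n) k
  have hg : ∀ k, g (k + 1) =
      if F k then g k else fun n => if n < l (k + 1) then st k (g k) n else e n := fun k => rfl
  have he : ∀ k n, l k ≤ n → g k n = e n := by
    intro k
    induction k with
    | zero => intro n _; rfl
    | succ k ih =>
      intro n hn
      rw [hg]
      split_ifs with h
      · exact ih n ((hl (Nat.lt_succ_self k)).le.trans hn)
      · simp [not_lt.2 hn]
  have hs : ∀ k n, n < l k → g (k + 1) n = g k n := by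
    intro k n hn
    rw [hg]
    split_ifs with h
    · rfl
    · have := hl (Nat.lt_succ_self k)
      have h2 : n < l (k + 1) := hn.trans this
      simp [h2, hst k _ n hn]
  have hs2 : ∀ k j n, n < l k → g (k + j) n = g k n := by
    intro k j n hn
    induction j with
    | zero => rfl
    | succ j ih =>
      rw [← add_assoc, hs, ih]
      exact hn.trans_le (hl.monotone (Nat.le_add_right _ _))
  have hc : ∀ k n, n < l k → g (n + 1) n = g k n := by
    intro k n hn
    rw [← hs2 k (n + 1) n hn, add_comm k, hs2 (n + 1) k n]
    exact (Nat.lt_succ_self n).trans_le hl.le_apply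
  refine ⟨fun n => g (n + 1) n, ?_, ?_⟩
  · intro k hk n h1 h2
    simp only
    rw [hc (k + 1) n h2, hg, if_pos hk, he k n h1]
  · intro k hk
    refine ⟨g k, fun i hi => ?_⟩
    simp only
    rw [hc (k + 1) i hi, hg, if_neg hk]
    simp [hi]

/-- For `m, m' ≥ 3` with `m ≠ m'`, there are no Borel maps
`φ : ([ω]^ω)^{2^{m'}} → ([ω]^ω)^{2^m}` and `ψ : 2^ℕ → 2^ℕ` such that whenever
`c` splits at least `m` of the `2^m` components of `φ(B)`, `ψ(c)` splits at
least `m'` of the `B_i`.  (The triples defining 𝔰_{2^m,m} for `m ≥ 3` form an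
antichain in the Borel Tukey ordering.) -/
theorem stmt18 (m m' : ℕ) (hm : 3 ≤ m) (hm' : 3 ≤ m') (hne : m ≠ m') :
    ¬ ∃ (φ : (Fin (2 ^ m') → InfC) → (Fin (2 ^ m) → InfC))
        (ψ : (ℕ → Bool) → (ℕ → Bool)),
      Measurable φ ∧ Measurable ψ ∧
      ∀ (B : Fin (2 ^ m') → InfC) (c : ℕ → Bool),
        m ≤ {i : Fin (2 ^ m) | Splits c (bset (φ B i).1)}.ncard →
        m' ≤ {i : Fin (2 ^ m') | Splits (ψ c) (bset (B i).1)}.ncard := by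
  rintro ⟨φ, ψ, -, hψ, H⟩
  -- Baire approximation
  have hB : ∀ x : ℕ, ∃ u : Set (ℕ → Bool), IsOpen u ∧ {c | ψ c x = false} =ᶠ[residual _] u := by
    intro x
    have : MeasurableSet {c | ψ c x = false} :=
      ((measurable_pi_apply x).comp hψ) (measurableSet_singleton false)
    exact this.residualEq_isOpen
  choose O hO hOe using hB
  have hG : {c : ℕ → Bool | ∀ x, ψ c x = false ↔ c ∈ O x} ∈ residual (ℕ → Bool) := by
    have : ∀ x, {c : ℕ → Bool | ψ c x = false ↔ c ∈ O x} ∈ residual (ℕ → Bool) :=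
      fun x => Filter.eventuallyEq_set.1 (hOe x)
    filter_upwards [countable_iInter_mem.2 this] with c hc
    exact fun x => mem_iInter.1 hc x
  have hinf : ∀ V : Set (ℕ → Bool), IsOpen V → V.Nonempty → {x | V ∩ O x = ∅}.Finite := by
    intro V hV hVn
    by_contra hfin
    classical
    have hfin : {x | V ∩ O x = ∅}.Infinite := hfin
    have hbs : bset (fun x => decide (V ∩ O x = ∅)) = {x | V ∩ O x = ∅} := by
      ext x; simp [bset]
    let B : Fin (2 ^ m') → InfC := fun _ => ⟨fun x => decide (V ∩ O x = ∅), by rwa [hbs]⟩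
    have hres : (⋂ j, {c : ℕ → Bool | Splits c (bset (φ B j).1)}) ∈ residual (ℕ → Bool) :=
      countable_iInter_mem.2 fun j => splits_residual_s18 _ (φ B j).2
    obtain ⟨c, hcV, hcG, hcS⟩ :=
      (dense_of_mem_residual (Filter.inter_mem hG hres)).inter_open_nonempty V hV hVn
    have h1 : {i : Fin (2 ^ m) | Splits c (bset (φ B i).1)} = univ := by
      ext j
      simpa using mem_iInter.1 hcS j
    have h2 := H B c (by rw [h1]; simpa using Nat.lt_two_pow_self.le)
    have h3 : {i : Fin (2 ^ m') | Splits (ψ c) (bset (B i).1)} = ∅ := by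
      ext i
      simp only [mem_ofPred_eq, mem_empty_iff_false, iff_false]
      rintro ⟨h4, -⟩
      obtain ⟨x, hx, hx2⟩ := h4.nonempty
      have hx : V ∩ O x = ∅ := by
        have : x ∈ bset (fun x => decide (V ∩ O x = ∅)) := hx
        rwa [hbs] at this
      have : c ∈ V ∩ O x := ⟨hcV, (hcG x).1 hx2⟩
      rw [hx] at this
      exact this
    rw [h3] at h2
    simp at h2
    omega
  obtain ⟨T, hTG, hTδ, hTd⟩ := mem_residual.1 hG
  obtain ⟨U, hUo, rfl⟩ := hTδ.eq_iInter_nat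
  have hUd : ∀ n, Dense (U n) := fun n => hTd.mono (iInter_subset _ n)
  let W : ℕ → Set (ℕ → Bool) := fun k => ⋂ j ∈ Finset.range (k + 1), U j
  have hWo : ∀ k, IsOpen (W k) := fun k => isOpen_biInter_finset fun j _ => hUo j
  have hWd : ∀ k, Dense (W k) := fun k => hTd.mono (fun c hc => by
    simp only [W, mem_iInter] at hc ⊢
    exact fun j _ => hc j)
  -- the sequence
  have hstep := fun k l x0 => step_s18 O hO hinf (W k) (hWo k) (hWd k) l x0
  choose nb hnb nl hnl st hst1 hst2 using hstep
  let q : ℕ → ℕ × ℕ := fun k => Nat.rec (0, 0) (fun k p => (nl k p.1 p.2, nb k p.1 p.2)) k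
  have hq : ∀ k, q (k + 1) = (nl k (q k).1 (q k).2, nb k (q k).1 (q k).2) := fun k => rfl
  let l : ℕ → ℕ := fun k => (q k).1
  let b : ℕ → ℕ := fun k => (q (k + 1)).2
  have hl : StrictMono l := strictMono_nat_of_lt_succ fun k => hnl k _ _
  have hb : StrictMono b := strictMono_nat_of_lt_succ fun k => hnb (k + 1) _ _
  have hl0 : l 0 = 0 := rfl
  have hblk : ∀ n, ∃ k, l k ≤ n ∧ n < l (k + 1) := by
    intro n
    have hex : ∃ k, n < l (k + 1) := ⟨n, (Nat.lt_succ_self n).trans_le hl.le_apply⟩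
    classical
    refine ⟨Nat.find hex, ?_, Nat.find_spec hex⟩
    rcases hk : Nat.find hex with _ | k
    · rw [hl0]; omega
    · have := Nat.find_min hex (m := k) (by omega)
      omega
  choose blk hblk1 hblk2 using hblk
  let col : ℕ → Fin (2 ^ m') := fun k => ⟨k % 2 ^ m', Nat.mod_lt _ (by positivity)⟩
  have hcol : ∀ i, {k | col k = i}.Infinite := by
    intro i
    refine Set.infinite_of_not_bddAbove ?_
    rintro ⟨M, hM⟩
    have h1 : i.1 + 2 ^ m' * (M + 1) ≤ M := by
      apply hM
      apply Fin.ext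
      simp [col, Nat.mod_eq_of_lt i.2]
    have h2 : 1 ≤ 2 ^ m' := Nat.one_le_two_pow
    nlinarith
  have hBi : ∀ i, (b '' {k | col k = i}).Infinite := fun i =>
    (hcol i).image hb.injective.injOn
  classical
  have hbs : ∀ i, bset (fun x => decide (x ∈ b '' {k | col k = i})) = b '' {k | col k = i} := by
    intro i; ext x; simp [bset]
  let B : Fin (2 ^ m') → InfC := fun i =>
    ⟨fun x => decide (x ∈ b '' {k | col k = i}), by rw [hbs]; exact hBi i⟩
  have hf : ∀ j, ∃ i, {n ∈ bset (φ B j).1 | col (blk n) = i}.Infinite := by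
    intro j
    by_contra hcon
    push Not at hcon
    refine (φ B j).2 ((Set.finite_iUnion hcon).subset ?_)
    intro n hn
    exact mem_iUnion.2 ⟨col (blk n), hn, rfl⟩
  choose f hf using hf
  obtain ⟨I, hI1, hI2⟩ := comb m m' hm hm' hne f
  have hres : (⋂ j, {c : ℕ → Bool | Splits c {n ∈ bset (φ B j).1 | col (blk n) = f j}})
      ∈ residual (ℕ → Bool) := countable_iInter_mem.2 fun j => splits_residual_s18 _ (hf j)
  obtain ⟨e, he⟩ := (dense_of_mem_residual hres).nonempty
  obtain ⟨c, hc1, hc2⟩ := build l hl (fun k s => st k (l k) (q k).2 s)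
    (fun k s => hst1 k _ _ s) (fun k => col k ∈ I) e
  have hc3 : ∀ k, col k ∉ I → c ∈ O (b k) ∧ c ∈ W k := by
    intro k hk
    obtain ⟨s, hs⟩ := hc2 k hk
    exact hst2 k _ _ s c hs
  have hne2 : ∃ i, i ∉ I := by
    by_contra hcon
    push Not at hcon
    have h1 : I = Finset.univ := Finset.eq_univ_iff_forall.2 hcon
    rw [h1] at hI1
    simp at hI1
    have : m' < 2 ^ m' := Nat.lt_two_pow_self
    omega
  have hcG : ∀ x, ψ c x = false ↔ c ∈ O x := by
    apply hTG
    obtain ⟨i, hi⟩ := hne2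
    refine mem_iInter.2 fun n => ?_
    obtain ⟨k, hk, hk2⟩ := (hcol i).exists_gt n
    have hk : col k = i := hk
    have h1 := (hc3 k (by rwa [hk])).2
    simp only [W, mem_iInter, Finset.mem_range] at h1
    exact h1 n (by omega)
  have h1 := H B c (by
    refine hI2.trans ?_
    rw [← Set.ncard_coe_finset]
    refine Set.ncard_le_ncard ?_ (Set.toFinite _)
    intro j hj
    have hj : f j ∈ I := by simpa using hj
    have hsp : Splits e {n ∈ bset (φ B j).1 | col (blk n) = f j} := mem_iInter.1 he j
    have hce : ∀ n, col (blk n) = f j → c n = e n := fun n hn =>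
      hc1 (blk n) (by simp only [hn, hj]) n (hblk1 n) (hblk2 n)
    constructor
    · refine hsp.1.mono ?_
      rintro n ⟨⟨hn1, hn2⟩, hn3⟩
      exact ⟨hn1, by rw [hce n hn2, hn3]⟩
    · refine hsp.2.mono ?_
      rintro n ⟨⟨hn1, hn2⟩, hn3⟩
      exact ⟨hn1, by rw [hce n hn2, hn3]⟩)
  have h2 : {i : Fin (2 ^ m') | Splits (ψ c) (bset (B i).1)} ⊆ (I : Set (Fin (2 ^ m'))) := by
    intro i hi
    by_contra hiI
    have hiI : i ∉ I := by simpa using hiI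
    obtain ⟨x, hx, hx2⟩ := hi.2.nonempty
    have hx : x ∈ bset (fun x => decide (x ∈ b '' {k | col k = i})) := hx
    rw [hbs] at hx
    obtain ⟨k, hk, rfl⟩ := hx
    have hk : col k = i := hk
    have := (hcG (b k)).2 (hc3 k (by rwa [hk])).1
    rw [this] at hx2
    exact absurd hx2 (by simp)
  have h3 := Set.ncard_le_ncard h2 (Set.toFinite _)
  rw [Set.ncard_coe_finset] at h3
  omega
end

section
/- Let X and Y be sets of natural numbers all of whose elements are ≥ 3, and suppose Y is not a subset of X. Then there is no Borel function ψ : 2^ℕ → 2^ℕ such that the image ψ(S) of every X-splitting family S ⊆ 2^ℕ is a Y-splitting family. (Together with the trivial morphisms for X ⊇ Y, this shows that the superset ordering on 𝒫(ω) embeds into the Borel Tukey ordering on triples defining the splitting number 𝔰.) -/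
/-- `S ⊆ 2^ℕ` is `X`-splitting: `S` is `(2^m, m)`-splitting for every `m ∈ X`. -/
def XSplitting (X : Set ℕ) (S : Set (ℕ → Bool)) : Prop :=
  ∀ m ∈ X, NMSplitting (2 ^ m) m S

/-- `x` and `y` agree below `n`. -/
def AgreeBelow (n : ℕ) (x y : ℕ → Bool) : Prop := ∀ i < n, x i = y i

theorem agree_open {O : Set (ℕ → Bool)} (hO : IsOpen O) {q : ℕ → Bool} (hq : q ∈ O) :
    ∃ N, ∀ c, AgreeBelow N q c → c ∈ O := by
  rw [isOpen_pi_iff] at hO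
  obtain ⟨J, u, hu, hJ⟩ := hO q hq
  refine ⟨J.sup id + 1, fun c hc => hJ ?_⟩
  intro i hi
  have : i ≤ J.sup id := Finset.le_sup (f := id) hi
  rw [← hc i (by omega)]
  exact (hu i hi).2

theorem isOpen_agree (n : ℕ) (x : ℕ → Bool) : IsOpen {c | AgreeBelow n x c} := by
  have : {c | AgreeBelow n x c} = ⋂ i ∈ Finset.range n, {c : ℕ → Bool | x i = c i} := by
    ext c; simp [AgreeBelow]
  rw [this]
  refine isOpen_biInter_finset fun i _ => ?_
  exact (isOpen_discrete {b : Bool | x i = b}).preimage (continuous_apply i)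

theorem baire_part (ψ : (ℕ → Bool) → (ℕ → Bool)) (hψ : Measurable ψ) :
    ∃ O : ℕ → Set (ℕ → Bool), (∀ t, IsOpen (O t)) ∧ Dense (⋂ t, O t) ∧
      ∀ q ∈ ⋂ t, O t, ∀ j, ∃ N, ∀ c ∈ ⋂ t, O t, AgreeBelow N q c → ψ c j = ψ q j := by
  have hm : ∀ (j : ℕ) (b : Bool), MeasurableSet {c | ψ c j = b} := fun j b =>
    ((measurable_pi_apply j).comp hψ) (MeasurableSet.of_discrete (s := {b}))
  have h1 : ∀ (j : ℕ) (b : Bool), ∃ u : Set (ℕ → Bool), IsOpen u ∧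
      ∀ᶠ c in residual (ℕ → Bool), (ψ c j = b ↔ c ∈ u) := by
    intro j b
    obtain ⟨u, hu, h⟩ := (hm j b).residualEq_isOpen
    refine ⟨u, hu, ?_⟩
    filter_upwards [h] with c hc
    exact iff_of_eq hc
  choose u hu h using h1
  have h2 : ∀ᶠ c in residual (ℕ → Bool), ∀ j b, (ψ c j = b ↔ c ∈ u j b) := by
    rw [eventually_countable_forall]
    intro j
    rw [eventually_countable_forall]
    intro b
    exact h j b
  obtain ⟨G, hGs, hG, hGd⟩ := mem_residual.1 h2
  obtain ⟨O, hO, rfl⟩ := hG.eq_iInter_nat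
  refine ⟨O, hO, hGd, fun q hq j => ?_⟩
  obtain ⟨N, hN⟩ := agree_open (hu j (ψ q j)) ((hGs hq j _).1 rfl)
  exact ⟨N, fun c hc hqc => (hGs hc j _).2 (hN c hqc)⟩

theorem dense_agree {G : Set (ℕ → Bool)} (hG : Dense G) (n : ℕ) (x : ℕ → Bool) :
    ∃ q ∈ G, AgreeBelow n x q := by
  obtain ⟨q, hq, hqG⟩ := hG.inter_open_nonempty _ (isOpen_agree n x) ⟨x, fun _ _ => rfl⟩
  exact ⟨q, hqG, hq⟩

theorem choose_part (ψ : (ℕ → Bool) → (ℕ → Bool)) (U : Ultrafilter ℕ)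
    (G : Set (ℕ → Bool)) (hG : Dense G) :
    ∃ (s : ℕ → Bool) (n0 : ℕ) (e : Bool), ∀ n ≥ n0, ∀ x, AgreeBelow n0 s x →
      ∃ q ∈ G, AgreeBelow n x q ∧ {j | ψ q j = e} ∈ U := by
  by_cases h : ∀ n x, ∃ q ∈ G, AgreeBelow n x q ∧ {j | ψ q j = false} ∈ U
  · exact ⟨fun _ => false, 0, false, fun n _ x _ => h n x⟩
  · push Not at h
    obtain ⟨n0, s, h⟩ := h
    refine ⟨s, n0, true, fun n hn x hx => ?_⟩
    obtain ⟨q, hq, hxq⟩ := dense_agree hG n x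
    refine ⟨q, hq, hxq, ?_⟩
    have := h q hq (fun i hi => (hx i hi).trans (hxq i (by omega)))
    rw [← Ultrafilter.compl_mem_iff_notMem] at this
    convert this using 1
    ext j; simp

/-- Truncation. -/
def truncAt (n : ℕ) (x : ℕ → Bool) : ℕ → Bool := fun i => if i < n then x i else false

theorem truncAt_agree (n : ℕ) (x : ℕ → Bool) : AgreeBelow n x (truncAt n x) := by
  intro i hi; simp [truncAt, hi]

theorem finite_range_trunc (n : ℕ) : (Set.range (truncAt n)).Finite := by
  let F : (Fin n → Bool) → (ℕ → Bool) := fun y i => if h : i < n then y ⟨i, h⟩ else false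
  refine (Set.finite_range F).subset ?_
  rintro _ ⟨x, rfl⟩
  refine ⟨fun i => x i, ?_⟩
  ext i
  simp [F, truncAt]

theorem AgreeBelow.mono {m n : ℕ} {x y : ℕ → Bool} (h : AgreeBelow n x y) (hmn : m ≤ n) :
    AgreeBelow m x y := fun i hi => h i (by omega)

theorem AgreeBelow.trans {n : ℕ} {x y z : ℕ → Bool} (h : AgreeBelow n x y)
    (h' : AgreeBelow n y z) : AgreeBelow n x z := fun i hi => (h i hi).trans (h' i hi)

theorem AgreeBelow.symm {n : ℕ} {x y : ℕ → Bool} (h : AgreeBelow n x y) :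
    AgreeBelow n y x := fun i hi => (h i hi).symm

theorem main_construction (ψ : (ℕ → Bool) → (ℕ → Bool)) (hψ : Measurable ψ) :
    ∃ (I a : ℕ → ℕ) (e : Bool), StrictMono I ∧ StrictMono a ∧
      ∀ D : Set ℕ, Dᶜ.Infinite → ∀ g : ℕ → Bool, ∃ c : ℕ → Bool,
        (∀ t ∈ D, ∀ x, I t ≤ x → x < I (t + 1) → c x = g x) ∧
        ∀ t ∉ D, ψ c (a t) = e := by
  classical
  obtain ⟨O, hO, hd, hc⟩ := baire_part ψ hψ
  set G := ⋂ t, O t with hGdef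
  obtain ⟨s, n0, e, hs⟩ := choose_part ψ (Filter.hyperfilter ℕ) G hd
  have hs' : ∀ n x, ∃ q, n0 ≤ n → AgreeBelow n0 s x →
      q ∈ G ∧ AgreeBelow n x q ∧ {j | ψ q j = e} ∈ Filter.hyperfilter ℕ := by
    intro n x
    by_cases h : n0 ≤ n ∧ AgreeBelow n0 s x
    · obtain ⟨q, h1, h2, h3⟩ := hs n h.1 x h.2
      exact ⟨q, fun _ _ => ⟨h1, h2, h3⟩⟩
    · exact ⟨s, fun h1 h2 => absurd ⟨h1, h2⟩ h⟩
  choose q hq using hs'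
  have step : ∀ t n M, ∃ a' N, n0 ≤ n → M < a' ∧ n < N ∧ ∀ x, AgreeBelow n0 s x →
      ∀ c, AgreeBelow N (q n (truncAt n x)) c → (∀ r ≤ t, c ∈ O r) ∧ (c ∈ G → ψ c a' = e) := by
    intro t n M
    by_cases hn : n0 ≤ n
    swap
    · exact ⟨0, 0, fun h => absurd h hn⟩
    set T : Set (ℕ → Bool) := {y | y ∈ Set.range (truncAt n) ∧ AgreeBelow n0 s y} with hT
    have hTf : T.Finite := (finite_range_trunc n).subset fun y hy => hy.1
    have h1 : (⋂ y ∈ T, {j | ψ (q n y) j = e}) ∩ Set.Ioi M ∈ Filter.hyperfilter ℕ := by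
      refine Filter.inter_mem ((Filter.biInter_mem hTf).2 fun y hy => (hq n y hn hy.2).2.2) ?_
      apply Filter.mem_hyperfilter_of_finite_compl
      exact (Set.finite_Iic M).subset fun x hx => by simpa using hx
    obtain ⟨a', ha', haM⟩ := Ultrafilter.nonempty_of_mem h1
    have h2 : ∀ y, ∃ N, y ∈ T → ∀ c, AgreeBelow N (q n y) c →
        (∀ r ≤ t, c ∈ O r) ∧ (c ∈ G → ψ c a' = e) := by
      intro y
      by_cases hy : y ∈ T
      swap
      · exact ⟨0, fun h => absurd h hy⟩
      have hG := (hq n y hn hy.2).1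
      obtain ⟨N1, hN1⟩ := hc _ hG a'
      have hop : IsOpen (⋂ r ∈ Finset.range (t + 1), O r) :=
        isOpen_biInter_finset fun i _ => hO i
      obtain ⟨N2, hN2⟩ := agree_open hop (q := q n y) (by
        simp only [Set.mem_iInter]
        intro i _
        exact Set.mem_iInter.1 hG i)
      refine ⟨max N1 N2, fun _ c hcc => ⟨fun r hr => ?_, fun hcG => ?_⟩⟩
      · have := hN2 c (hcc.mono (le_max_right _ _))
        simp only [Set.mem_iInter] at this
        exact this r (Finset.mem_range.2 (by omega))
      · rw [hN1 c hcG (hcc.mono (le_max_left _ _))]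
        exact Set.mem_iInter₂.1 ha' y hy
    choose N hN using h2
    refine ⟨a', hTf.toFinset.sup N + n + 1, fun _ => ⟨haM, by omega, fun x hx c hcc => ?_⟩⟩
    have hyT : truncAt n x ∈ T :=
      ⟨⟨x, rfl⟩, hx.trans ((truncAt_agree n x).mono hn)⟩
    refine hN _ hyT c (hcc.mono ?_)
    have := Finset.le_sup (f := N) (hTf.mem_toFinset.2 hyT)
    omega
  choose fa fN hf using step
  -- state: (I t, last value of a)
  let st : ℕ → ℕ × ℕ := fun t => Nat.rec (n0, 0) (fun t p => (fN t p.1 p.2, fa t p.1 p.2)) t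
  let I : ℕ → ℕ := fun t => (st t).1
  let a : ℕ → ℕ := fun t => (st (t + 1)).2
  have hI : ∀ t, n0 ≤ I t := by
    intro t
    induction t with
    | zero => exact le_rfl
    | succ t ih => exact ih.trans ((hf t (st t).1 (st t).2 ih).2.1).le
  have hst := fun t => hf t (st t).1 (st t).2 (hI t)
  have hImono : StrictMono I := strictMono_nat_of_lt_succ fun t => (hst t).2.1
  have hamono : StrictMono a := strictMono_nat_of_lt_succ fun t => (hst (t + 1)).1
  refine ⟨I, a, e, hImono, hamono, fun D hD g => ?_⟩
  let y : ℕ → ℕ → Bool := fun t => Nat.rec s (fun t z =>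
    if t ∈ D then (fun x => if x < I t then z x else g x) else q (I t) (truncAt (I t) z)) t
  have y0 : y 0 = s := rfl
  have yD : ∀ t ∈ D, y (t + 1) = fun x => if x < I t then y t x else g x := fun t ht => if_pos ht
  have yN : ∀ t ∉ D, y (t + 1) = q (I t) (truncAt (I t) (y t)) := fun t ht => if_neg ht
  have hy : ∀ t, AgreeBelow n0 s (y t) ∧ AgreeBelow (I t) (y t) (y (t + 1)) := by
    have aux : ∀ t, AgreeBelow n0 s (y t) → AgreeBelow (I t) (y t) (y (t + 1)) := by
      intro t ht
      by_cases h : t ∈ D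
      · rw [yD t h]
        intro i hi
        simp [hi]
      · rw [yN t h]
        exact (truncAt_agree _ _).trans
          (hq (I t) _ (hI t) (ht.trans ((truncAt_agree _ _).mono (hI t)))).2.1
    have aux2 : ∀ t, AgreeBelow n0 s (y t) := by
      intro t
      induction t with
      | zero => exact fun _ _ => rfl
      | succ t ih => exact ih.trans ((aux t ih).mono (hI t))
    exact fun t => ⟨aux2 t, aux t (aux2 t)⟩
  have hy2 : ∀ t t', t ≤ t' → AgreeBelow (I t) (y t) (y t') := by
    intro t t' h
    induction t', h using Nat.le_induction with
    | base => exact fun _ _ => rfl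
    | succ k hk ih => exact ih.trans ((hy k).2.mono (hImono.monotone hk))
  let c : ℕ → Bool := fun x => y (x + 1) x
  have hyc : ∀ t, AgreeBelow (I t) (y t) c := by
    intro t x hx
    rcases le_total t (x + 1) with h | h
    · exact hy2 t (x + 1) h x hx
    · exact (hy2 (x + 1) t h x (lt_of_lt_of_le (Nat.lt_succ_self x) (hImono.le_apply))).symm
  have hND : ∀ t ∉ D, (∀ r ≤ t, c ∈ O r) ∧ (c ∈ G → ψ c (a t) = e) := by
    intro t ht
    refine (hst t).2.2 (y t) (hy t).1 c ?_
    have := hyc (t + 1)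
    rw [yN t ht] at this
    exact this
  have hcG : c ∈ G := by
    rw [hGdef, Set.mem_iInter]
    intro r
    obtain ⟨t, ht, hrt⟩ := hD.exists_gt r
    exact (hND t ht).1 r hrt.le
  refine ⟨c, fun t ht x hx hx' => ?_, fun t ht => (hND t ht).2 hcG⟩
  rw [← hyc (t + 1) x hx', yD t ht]
  simp [not_lt.2 hx]

theorem exists_splitter {ι : Type*} [Finite ι] (B : ι → Set ℕ) (hB : ∀ i, (B i).Infinite) :
    ∃ g, ∀ i, Splits g (B i) := by
  have key : ∀ (i : ι) (b : Bool), ∀ᶠ g in residual (ℕ → Bool), {k ∈ B i | g k = b}.Infinite := by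
    intro i b
    have : ∀ n : ℕ, ∀ᶠ g in residual (ℕ → Bool), ∃ k ∈ B i, n < k ∧ g k = b := by
      intro n
      apply residual_of_dense_open
      · have : {g : ℕ → Bool | ∃ k ∈ B i, n < k ∧ g k = b} =
            ⋃ k ∈ {k ∈ B i | n < k}, {g : ℕ → Bool | g k = b} := by
          ext g; simp [and_assoc]
        rw [this]
        refine isOpen_biUnion fun k _ => ?_
        exact (isOpen_discrete {b' : Bool | b' = b}).preimage
          (continuous_apply (A := fun _ : ℕ => Bool) k)
      · rw [dense_iff_inter_open]
        rintro V hV ⟨x, hx⟩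
        obtain ⟨N, hN⟩ := agree_open hV hx
        obtain ⟨k, hk, hkN⟩ := (hB i).exists_gt (max n N)
        refine ⟨Function.update x k b, hN _ fun j hj => ?_, k, hk, by omega, by simp⟩
        rw [Function.update_of_ne]
        omega
    filter_upwards [eventually_countable_forall.2 this] with g hg
    refine Set.infinite_of_not_bddAbove ?_
    rintro ⟨n, hn⟩
    obtain ⟨k, hk, hnk, hgk⟩ := hg n
    have := hn ⟨hk, hgk⟩
    omega
  have h2 : ∀ᶠ g in residual (ℕ → Bool), ∀ i b, {k ∈ B i | g k = b}.Infinite := by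
    rw [eventually_countable_forall]
    intro i
    rw [eventually_countable_forall]
    exact key i
  obtain ⟨g, hg⟩ := (dense_of_mem_residual h2).nonempty
  exact ⟨g, fun i => ⟨hg i false, hg i true⟩⟩

theorem fibers_large {α β : Type*} [Fintype α] [Fintype β] [DecidableEq β] (f : α → β) (r d : ℕ)
    (hd : d ≤ Fintype.card β) (hr : r + d = Fintype.card β) :
    ∃ R : Finset β, R.card = r ∧
      r * Fintype.card α ≤ (Finset.univ.filter fun x => f x ∈ R).card * Fintype.card β := by
  induction d generalizing r with
  | zero => exact ⟨Finset.univ, by simpa using hr.symm, by simp [← hr, mul_comm]⟩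
  | succ d ih =>
    obtain ⟨R, hR, h⟩ := ih (r + 1) (by omega) (by omega)
    have hne : R.Nonempty := Finset.card_pos.1 (by omega)
    obtain ⟨b, hb, hmin⟩ := R.exists_min_image (fun b => (Finset.univ.filter fun x => f x = b).card) hne
    have hsum : (Finset.univ.filter fun x => f x ∈ R).card =
        ∑ b ∈ R, (Finset.univ.filter fun x => f x = b).card := by
      rw [Finset.card_eq_sum_card_fiberwise (f := f) (t := R) (by intro x hx; simpa using hx)]
      refine Finset.sum_congr rfl fun b hb => ?_
      congr 1; ext x; simp; rintro rfl; exact hb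
    have hsum' : (Finset.univ.filter fun x => f x ∈ R.erase b).card =
        ∑ b ∈ R.erase b, (Finset.univ.filter fun x => f x = b).card := by
      rw [Finset.card_eq_sum_card_fiberwise (f := f) (t := R.erase b)
        (by intro x hx; simpa [and_comm] using hx)]
      refine Finset.sum_congr rfl fun b hb => ?_
      congr 1; ext x; simp; rintro rfl; simpa using hb
    have hadd := Finset.add_sum_erase R (fun b => (Finset.univ.filter fun x => f x = b).card) hb
    have hlow : r * (Finset.univ.filter fun x => f x = b).card ≤
        ∑ b ∈ R.erase b, (Finset.univ.filter fun x => f x = b).card := by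
      have := Finset.card_nsmul_le_sum (R.erase b)
        (fun b => (Finset.univ.filter fun x => f x = b).card) _
        (fun x hx => hmin x (Finset.mem_of_mem_erase hx))
      rwa [Finset.card_erase_of_mem hb, hR, smul_eq_mul, Nat.add_sub_cancel] at this
    refine ⟨R.erase b, by rw [Finset.card_erase_of_mem hb, hR]; simp, ?_⟩
    rw [hsum] at h
    rw [hsum']
    rw [← hadd] at h
    generalize (Finset.univ.filter fun x => f x = b).card = v at *
    generalize ∑ b ∈ R.erase b, (Finset.univ.filter fun x => f x = b).card = S at *
    -- (r+1) A ≤ (v+S) C, r v ≤ S ⊢ r A ≤ S C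
    have h1 : (r + 1) * (r * Fintype.card α) ≤ (r + 1) * (S * Fintype.card β) := by
      calc (r + 1) * (r * Fintype.card α) = r * ((r + 1) * Fintype.card α) := by ring
        _ ≤ r * ((v + S) * Fintype.card β) := Nat.mul_le_mul_left _ h
        _ = (r * v) * Fintype.card β + r * S * Fintype.card β := by ring
        _ ≤ S * Fintype.card β + r * S * Fintype.card β := by gcongr
        _ = _ := by ring
    exact Nat.le_of_mul_le_mul_left h1 (by omega)

theorem arith_aux (m d : ℕ) (hm : 3 ≤ m) (hd : 1 ≤ d) : m + d ≤ (m - 1) * 2 ^ d := by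
  obtain ⟨p, rfl⟩ : ∃ p, m = p + 1 := ⟨m - 1, by omega⟩
  simp only [Nat.add_sub_cancel]
  induction d, hd using Nat.le_induction with
  | base => omega
  | succ d hd ih =>
    rw [pow_succ]
    nlinarith

theorem exists_small_image (k m : ℕ) (hm : 3 ≤ m) (hkm : k ≠ m)
    (f : Fin (2 ^ k) → Fin (2 ^ m)) :
    ∃ (F : Finset (Fin (2 ^ k))) (R : Finset (Fin (2 ^ m))),
      k ≤ F.card ∧ R.card < m ∧ ∀ i ∈ F, f i ∈ R := by
  classical
  rcases lt_or_gt_of_ne hkm with h | h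
  · obtain ⟨F, -, hF⟩ := Finset.exists_subset_card_eq
      (s := (Finset.univ : Finset (Fin (2 ^ k)))) (n := k) (by simpa using Nat.lt_two_pow_self.le)
    exact ⟨F, F.image f, hF.ge, (Finset.card_image_le.trans hF.le).trans_lt h,
      fun i hi => Finset.mem_image_of_mem f hi⟩
  · have h2 : m < 2 ^ m := Nat.lt_two_pow_self
    obtain ⟨R, hR, hle⟩ := fibers_large f (m - 1) (2 ^ m - (m - 1)) (by simp) (by simp; omega)
    refine ⟨Finset.univ.filter fun x => f x ∈ R, R, ?_, by omega, fun i hi => by simpa using hi⟩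
    obtain ⟨d, rfl⟩ : ∃ d, k = m + d := ⟨k - m, by omega⟩
    have h3 := arith_aux m d hm (by omega)
    simp only [Fintype.card_fin] at hle
    have h4 : (m - 1) * 2 ^ (m + d) = (m - 1) * 2 ^ d * 2 ^ m := by ring
    rw [h4] at hle
    exact h3.trans (Nat.le_of_mul_le_mul_right hle (by positivity))

theorem Splits.mono {c : ℕ → Bool} {A B : Set ℕ} (h : Splits c A) (hAB : A ⊆ B) : Splits c B :=
  ⟨h.1.mono fun _ hx => ⟨hAB hx.1, hx.2⟩, h.2.mono fun _ hx => ⟨hAB hx.1, hx.2⟩⟩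

theorem Splits.congr {c g : ℕ → Bool} {A : Set ℕ} (h : Splits g A) (hc : ∀ x ∈ A, c x = g x) :
    Splits c A :=
  ⟨h.1.mono fun x hx => ⟨hx.1, (hc x hx.1).trans hx.2⟩,
   h.2.mono fun x hx => ⟨hx.1, (hc x hx.1).trans hx.2⟩⟩

/-- If `X, Y` are sets of naturals `≥ 3` and `Y ⊄ X`, then there is no Borel
`ψ : 2^ℕ → 2^ℕ` carrying every `X`-splitting family to a `Y`-splitting family.
(The superset ordering on 𝒫(ω) embeds into the Borel Tukey ordering on
triples defining 𝔰.) -/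
theorem stmt19 (X Y : Set ℕ) (hX : ∀ m ∈ X, 3 ≤ m) (hY : ∀ m ∈ Y, 3 ≤ m)
    (hYX : ¬ Y ⊆ X) :
    ¬ ∃ ψ : (ℕ → Bool) → (ℕ → Bool),
      Measurable ψ ∧
      ∀ S : Set (ℕ → Bool), XSplitting X S → XSplitting Y (ψ '' S) := by
  classical
  rintro ⟨ψ, hψ, H⟩
  obtain ⟨m, hmY, hmX⟩ := Set.not_subset.1 hYX
  have hm := hY m hmY
  obtain ⟨I, a, e, hI, ha, hmain⟩ := main_construction ψ hψ
  have hmod : ∀ j : Fin (2 ^ m), {t : ℕ | t % 2 ^ m = j}.Infinite := by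
    intro j
    refine Set.infinite_of_not_bddAbove ?_
    rintro ⟨n, hn⟩
    have h1 : 2 ^ m * (n + 1) + (j : ℕ) ∈ {t : ℕ | t % 2 ^ m = j} := by
      simp [Nat.mul_add_mod, Nat.mod_eq_of_lt j.2]
    have h2 := hn h1
    have : 1 ≤ 2 ^ m := Nat.one_le_two_pow
    nlinarith
  let A : Fin (2 ^ m) → Set ℕ := fun j => a '' {t : ℕ | t % 2 ^ m = j}
  have hA : ∀ j, (A j).Infinite := fun j => (hmod j).image ha.injective.injOn
  let S : Set (ℕ → Bool) := {c | {j | Splits (ψ c) (A j)}.ncard < m}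
  have hS : XSplitting X S := by
    intro k hk B hB
    have hkm : k ≠ m := fun h => hmX (h ▸ hk)
    let P : Fin (2 ^ m) → Set ℕ := fun j =>
      {x | ∃ t, I t ≤ x ∧ x < I (t + 1) ∧ t % 2 ^ m = j}
    have hf : ∀ i, ∃ j, (B i ∩ P j).Infinite := by
      intro i
      by_contra hcon
      push Not at hcon
      have h1 : (⋃ j, B i ∩ P j).Finite := Set.finite_iUnion hcon
      refine hB i ((h1.union (Set.finite_Iio (I 0))).subset fun x hx => ?_)
      by_cases hx0 : x < I 0
      · exact Or.inr hx0
      · left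
        have hex : ∃ t, x < I t := ⟨x + 1, lt_of_lt_of_le (Nat.lt_succ_self x) hI.le_apply⟩
        obtain ⟨t, ht⟩ : ∃ t, Nat.find hex = t + 1 := by
          refine ⟨Nat.find hex - 1, ?_⟩
          have : Nat.find hex ≠ 0 := fun h0 => hx0 (h0 ▸ Nat.find_spec hex)
          omega
        have h2 : x < I (t + 1) := ht ▸ Nat.find_spec hex
        have h3 : ¬ x < I t := Nat.find_min hex (by omega)
        exact Set.mem_iUnion.2 ⟨⟨t % 2 ^ m, Nat.mod_lt _ (by positivity)⟩, hx, t,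
          not_lt.1 h3, h2, rfl⟩
    choose f hf using hf
    obtain ⟨F, R, hF, hR, hFR⟩ := exists_small_image k m hm hkm f
    obtain ⟨g, hg⟩ := exists_splitter (fun i => B i ∩ P (f i)) hf
    let D : Set ℕ := {t | ∃ j ∈ R, t % 2 ^ m = (j : Fin (2 ^ m))}
    have hD : Dᶜ.Infinite := by
      have : ∃ j, j ∉ R := by
        by_contra hcon
        push Not at hcon
        have h1 : R = Finset.univ := Finset.eq_univ_iff_forall.2 hcon
        have h2 : m < 2 ^ m := Nat.lt_two_pow_self
        rw [h1, Finset.card_univ, Fintype.card_fin] at hR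
        omega
      obtain ⟨j, hj⟩ := this
      refine (hmod j).mono fun t ht => ?_
      rintro ⟨j', hj', h⟩
      have : j = j' := Fin.ext ((Set.mem_ofPred.1 ht).symm.trans h)
      exact hj (this ▸ hj')
    obtain ⟨c, hcD, hcN⟩ := hmain D hD g
    refine ⟨c, ?_, ?_⟩
    · refine lt_of_le_of_lt ?_ hR
      rw [← Set.ncard_coe_finset R]
      refine Set.ncard_le_ncard ?_ (Set.toFinite _)
      intro j hj
      by_contra hjR
      have hval : ∀ x ∈ A j, ψ c x = e := by
        rintro _ ⟨t, ht, rfl⟩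
        apply hcN
        rintro ⟨j', hj', h⟩
        have : j = j' := Fin.ext ((Set.mem_ofPred.1 ht).symm.trans h)
        exact hjR (this ▸ hj')
      obtain ⟨x, hx, hx'⟩ := hj.1.nonempty
      obtain ⟨z, hz, hz'⟩ := hj.2.nonempty
      have h1 := hval x hx
      have h2 := hval z hz
      rw [hx'] at h1
      rw [hz', ← h1] at h2
      exact Bool.noConfusion h2
    · refine hF.trans ?_
      rw [← Set.ncard_coe_finset F]
      refine Set.ncard_le_ncard ?_ (Set.toFinite _)
      intro i hi
      refine Splits.mono (Splits.congr (hg i) ?_) Set.inter_subset_left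
      rintro x ⟨-, t, h1, h2, h3⟩
      exact hcD t ⟨f i, hFR i hi, h3⟩ x h1 h2
  obtain ⟨_, ⟨c, hc, rfl⟩, hle⟩ := H S hS m hmY A hA
  exact absurd hc (not_lt.2 hle)
end
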